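/- arXiv:0810.2325 — 2 statements merged into one kernel-verified Lean document; each statement's English description precedes it below -/
import Mathlib

section
/- For every fixed positive integer d and every fixed integer m ≥ 0, the limit as x → ∞ of ( ∑_{p ≤ x, p prime, p ≡ 1 (mod d)} p^m ) / ( ∑_{p ≤ x, p prime} p^m ) exists and equals 1/φ(d). -/
open Filter

section Helpers

open Topology MeasureTheory Complex FourierTransform

lemma wi_limit (r : ℝ → ℂ) (hrm : Measurable r) (M : ℝ) (hM : ∀ u, ‖r u‖ ≤ M)
    (hr0 : ∀ u ≤ 0, r u = 0) (H : ℂ → ℂ) (hH : ContinuousOn H {s | 1 ≤ s.re})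
    (hF : ∀ ε : ℝ, 0 < ε → ∀ t : ℝ,
      ∫ u : ℝ, r u * cexp (-(ε + 2 * Real.pi * t * I) * u) = H (1 + ε + 2 * Real.pi * t * I))
    (f : ℝ → ℂ) (hf : Continuous f) (hfc : HasCompactSupport f)
    (hK : Integrable (𝓕 f)) :
    Tendsto (fun y : ℝ => ∫ u : ℝ, r u * 𝓕 f (u - y)) atTop (𝓝 0) := by
  have hM0 : 0 ≤ M := (norm_nonneg _).trans (hM 0)
  -- key identity
  have key : ∀ y : ℝ, ∫ u : ℝ, r u * 𝓕 f (u - y) =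
      𝓕 (fun t : ℝ => H (1 + 2 * Real.pi * t * I) * f t) (-y) := by
    intro y
    have h1 : ∀ ε : ℝ, 0 < ε →
        ∫ u : ℝ, (r u * cexp (-(ε * u))) * 𝓕 f (u - y) =
        ∫ t : ℝ, H (1 + ε + 2 * Real.pi * t * I) * (cexp (2 * Real.pi * t * y * I) * f t) := by
      intro ε hε
      set h : ℝ → ℂ := fun u => r u * cexp (-(ε * u)) with hh
      set g : ℝ → ℂ := fun t => cexp (2 * Real.pi * t * y * I) * f t with hg
      have hgi : Integrable g := by
        apply Continuous.integrable_of_hasCompactSupport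
        · fun_prop
        · exact hfc.mul_left
      have hhi : Integrable h := by
        have : h = Set.indicator (Set.Ioi 0) h := by
          ext u
          by_cases hu : 0 < u
          · simp [hu]
          · simp [hu, hh, hr0 u (not_lt.mp hu)]
        rw [this, integrable_indicator_iff measurableSet_Ioi]
        have hb := (integrableOn_exp_mul_Ioi (a := -ε) (by linarith) 0).const_mul M
        refine Integrable.mono' hb ?_ ?_
        · apply Measurable.aestronglyMeasurable
          fun_prop
        · refine Eventually.of_forall fun u => ?_
          simp only [hh, norm_mul, Complex.norm_exp]
          have : (-(ε * u : ℂ)).re = -ε * u := by simp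
          rw [this]
          gcongr
          exact hM u
      have := VectorFourier.integral_fourierIntegral_smul_eq_flip (𝕜 := ℝ) (e := Real.fourierChar)
        (μ := volume) (ν := volume) (L := innerₗ ℝ) (f := h) (g := g) Real.continuous_fourierChar
        (by exact continuous_inner) hhi hgi
      have e1 : ∀ t : ℝ, VectorFourier.fourierIntegral Real.fourierChar volume (innerₗ ℝ) h t =
          H (1 + ε + 2 * Real.pi * t * I) := by
        intro t
        change 𝓕 h t = _
        rw [Real.fourier_real_eq_integral_exp_smul, ← hF ε hε t]
        congr 1; ext u
        simp only [hh, smul_eq_mul]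
        rw [mul_comm, mul_assoc, ← Complex.exp_add]
        congr 2; push_cast; ring
      have e2 : ∀ u : ℝ, VectorFourier.fourierIntegral Real.fourierChar volume (innerₗ ℝ).flip g u =
          𝓕 f (u - y) := by
        intro u
        have : (innerₗ ℝ).flip = innerₗ ℝ := by
          ext; simp
        rw [this]
        change 𝓕 g u = _
        rw [Real.fourier_real_eq_integral_exp_smul, Real.fourier_real_eq_integral_exp_smul]
        congr 1; ext t
        simp only [hg, smul_eq_mul]
        rw [← mul_assoc, ← Complex.exp_add]
        congr 2; push_cast; ring
      simp only [e1, e2, smul_eq_mul] at this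
      exact this.symm
    -- limits
    have l1 : Tendsto (fun ε : ℝ => ∫ u : ℝ, (r u * cexp (-(ε * u))) * 𝓕 f (u - y)) (𝓝[>] 0)
        (𝓝 (∫ u : ℝ, r u * 𝓕 f (u - y))) := by
      have hKy : Integrable (fun u => 𝓕 f (u - y)) := hK.comp_sub_right y
      apply tendsto_integral_filter_of_dominated_convergence (fun u => M * ‖𝓕 f (u - y)‖)
      · refine Eventually.of_forall fun ε => ?_
        apply AEStronglyMeasurable.mul _ hKy.1
        apply Measurable.aestronglyMeasurable
        fun_prop
      · filter_upwards [self_mem_nhdsWithin] with ε hε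
        refine Eventually.of_forall fun u => ?_
        rw [norm_mul]
        gcongr
        by_cases hu : 0 < u
        · rw [norm_mul, Complex.norm_exp]
          have : (-(ε * u : ℂ)).re = -(ε * u) := by simp
          rw [this]
          have h2 : Real.exp (-(ε * u)) ≤ 1 := by
            rw [Real.exp_le_one_iff]
            have : 0 < ε := hε
            nlinarith
          calc ‖r u‖ * Real.exp (-(ε * u)) ≤ M * 1 := by
                gcongr; exact hM u
            _ = M := mul_one M
        · simp [hr0 u (not_lt.mp hu), hM0]
      · exact hKy.norm.const_mul M
      · refine Eventually.of_forall fun u => ?_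
        have : Continuous (fun ε : ℝ => (r u * cexp (-(ε * u))) * 𝓕 f (u - y)) := by fun_prop
        have h3 := (this.tendsto 0).mono_left (nhdsWithin_le_nhds (s := Set.Ioi 0))
        simpa using h3
    have l2 : Tendsto (fun ε : ℝ => ∫ t : ℝ, H (1 + ε + 2 * Real.pi * t * I) *
          (cexp (2 * Real.pi * t * y * I) * f t)) (𝓝[>] 0)
        (𝓝 (∫ t : ℝ, H (1 + 2 * Real.pi * t * I) * (cexp (2 * Real.pi * t * y * I) * f t))) := by
      -- bound on compact
      have hcont : ContinuousOn (fun q : ℝ × ℝ => H (1 + q.1 + 2 * Real.pi * q.2 * I))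
          (Set.Ici 0 ×ˢ Set.univ) := by
        apply hH.comp (by fun_prop)
        rintro ⟨e, t⟩ ⟨he, -⟩
        simpa using he
      have hcpt : IsCompact (Set.Icc (0:ℝ) 1 ×ˢ tsupport f) := isCompact_Icc.prod hfc
      obtain ⟨B, hB⟩ := hcpt.exists_bound_of_continuousOn (hcont.mono (by
        intro q hq; exact ⟨hq.1.1, trivial⟩))
      apply tendsto_integral_filter_of_dominated_convergence (fun t => B * ‖f t‖)
      · filter_upwards [self_mem_nhdsWithin] with ε hε
        apply Continuous.aestronglyMeasurable
        apply Continuous.mul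
        · have := hcont.comp_continuous (f := fun t : ℝ => ((ε, t) : ℝ × ℝ)) (by fun_prop)
            (fun t => ⟨Set.mem_Ici.2 (le_of_lt (Set.mem_Ioi.1 hε)), trivial⟩)
          exact this
        · fun_prop
      · filter_upwards [Ioo_mem_nhdsGT (show (0:ℝ) < 1 by norm_num)] with ε hε
        refine Eventually.of_forall fun t => ?_
        have n1 : ‖cexp (2 * Real.pi * t * y * I)‖ = 1 := by
          rw [show (2 * Real.pi * t * y * I : ℂ) = ((2 * Real.pi * t * y : ℝ) : ℂ) * I by push_cast; ring]
          exact Complex.norm_exp_ofReal_mul_I _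
        rw [norm_mul, norm_mul, n1, one_mul]
        by_cases ht : t ∈ tsupport f
        · gcongr
          exact hB (ε, t) ⟨⟨hε.1.le, hε.2.le⟩, ht⟩
        · simp [image_eq_zero_of_notMem_tsupport ht]
      · exact ((hf.integrable_of_hasCompactSupport hfc).norm).const_mul B
      · refine Eventually.of_forall fun t => ?_
        apply Tendsto.mul_const
        have h4 : ContinuousWithinAt (fun ε : ℝ => H (1 + ε + 2 * Real.pi * t * I)) (Set.Ici 0) 0 := by
          have := hcont.comp (s := Set.Ici (0:ℝ)) (f := fun ε : ℝ => ((ε, t) : ℝ × ℝ)) (by fun_prop)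
            (fun ε hε => ⟨hε, trivial⟩)
          exact this 0 (by simp)
        have h5 := h4.tendsto.mono_left (nhdsWithin_mono _ Set.Ioi_subset_Ici_self)
        simpa using h5
    have l3 := l1.congr' (by
      filter_upwards [self_mem_nhdsWithin] with ε hε using h1 ε hε)
    rw [tendsto_nhds_unique l3 l2, Real.fourier_real_eq_integral_exp_smul]
    congr 1; ext t
    simp only [smul_eq_mul]
    rw [mul_left_comm]
    congr 3; push_cast; ring
  simp_rw [key]
  have := (Real.zero_at_infty_fourier (fun t : ℝ => H (1 + 2 * Real.pi * t * I) * f t))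
  refine this.comp ?_
  rw [cocompact_eq_atBot_atTop]
  exact tendsto_neg_atTop_atBot.mono_right le_sup_left

noncomputable def tri (l : ℝ) (t : ℝ) : ℂ := ((max 0 (1 - |t| / l) : ℝ) : ℂ)

lemma tri_cont (l : ℝ) : Continuous (tri l) := by
  unfold tri; fun_prop

lemma tri_zero {l : ℝ} (hl : 0 < l) {t : ℝ} (ht : l ≤ |t|) : tri l t = 0 := by
  unfold tri
  rw [max_eq_left]; · simp
  have : 1 ≤ |t| / l := by rwa [one_le_div hl]
  linarith

lemma tri_supp {l : ℝ} (hl : 0 < l) : HasCompactSupport (tri l) := by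
  refine HasCompactSupport.intro (isCompact_Icc (a := -l) (b := l)) fun t ht => ?_
  apply tri_zero hl
  by_contra h
  push Not at h
  exact ht ⟨(abs_lt.1 h).1.le, (abs_lt.1 h).2.le⟩

lemma tri_half {l : ℝ} (hl : 0 < l) {c : ℂ} (hc : c ≠ 0) :
    ∫ t in (0:ℝ)..l, tri l t * cexp (c * t) = cexp (c * l) / (l * c ^ 2) - (1 / c + 1 / (l * c ^ 2)) := by
  have hl' : (l : ℂ) ≠ 0 := by exact_mod_cast hl.ne'
  have e : ∫ t in (0:ℝ)..l, tri l t * cexp (c * t) =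
      ∫ t in (0:ℝ)..l, (1 - (t:ℂ) / l) * cexp (c * t) := by
    apply intervalIntegral.integral_congr
    intro t ht
    rw [Set.uIcc_of_le hl.le] at ht
    simp only [tri]
    rw [max_eq_right, abs_of_nonneg ht.1]; · push_cast; rfl
    rw [abs_of_nonneg ht.1]
    have := (div_le_one hl).2 ht.2
    linarith
  rw [e]
  have hd : ∀ t ∈ Set.uIcc 0 l, HasDerivAt (fun t : ℝ => (1 - (t:ℂ) / l) * cexp (c * t) / c +
      cexp (c * t) / (l * c ^ 2)) ((1 - (t:ℂ) / l) * cexp (c * t)) t := by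
    intro t _
    have h1 : HasDerivAt (fun t : ℝ => (t : ℂ)) 1 t := Complex.ofRealCLM.hasDerivAt
    have h2 : HasDerivAt (fun t : ℝ => cexp (c * t)) (cexp (c * t) * (c * 1)) t := (h1.const_mul c).cexp
    have h3 := (((h1.div_const (l:ℂ)).const_sub 1).mul h2).div_const c |>.add (h2.div_const (l * c ^ 2))
    refine HasDerivAt.congr_deriv h3 ?_
    field_simp
    ring
  rw [intervalIntegral.integral_eq_sub_of_hasDerivAt hd]
  · simp [hl']
    try field_simp
    try ring
  · apply Continuous.intervalIntegrable; fun_prop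

lemma tri_half0 {l : ℝ} (hl : 0 < l) :
    ∫ t in (0:ℝ)..l, tri l t = l / 2 := by
  have hl' : (l : ℂ) ≠ 0 := by exact_mod_cast hl.ne'
  have e : ∫ t in (0:ℝ)..l, tri l t =
      ∫ t in (0:ℝ)..l, (1 - (t:ℂ) / l) := by
    apply intervalIntegral.integral_congr
    intro t ht
    rw [Set.uIcc_of_le hl.le] at ht
    simp only [tri]
    rw [max_eq_right, abs_of_nonneg ht.1]; · push_cast; rfl
    rw [abs_of_nonneg ht.1]
    have := (div_le_one hl).2 ht.2
    linarith
  rw [e]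
  have hd : ∀ t ∈ Set.uIcc 0 l, HasDerivAt (fun t : ℝ => (t : ℂ) - (t:ℂ) * t / (2 * l))
      ((1 - (t:ℂ) / l)) t := by
    intro t _
    have h1 : HasDerivAt (fun t : ℝ => (t : ℂ)) 1 t := Complex.ofRealCLM.hasDerivAt
    have h3 := h1.sub ((h1.mul h1).div_const (2 * l : ℂ))
    refine HasDerivAt.congr_deriv h3 ?_
    field_simp
    ring
  rw [intervalIntegral.integral_eq_sub_of_hasDerivAt hd]
  · simp
    field_simp
    ring
  · apply Continuous.intervalIntegrable; fun_prop

lemma tri_fourier {l : ℝ} (hl : 0 < l) (x : ℝ) :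
    𝓕 (tri l) x = ((l * Real.sinc (Real.pi * (l * x)) ^ 2 : ℝ) : ℂ) := by
  have hl' : (l : ℂ) ≠ 0 := by exact_mod_cast hl.ne'
  rw [Real.fourier_real_eq_integral_exp_smul]
  set c : ℂ := -2 * Real.pi * x * I with hc
  have e0 : ∫ v : ℝ, cexp (↑(-2 * Real.pi * v * x) * I) • tri l v =
      ∫ t in (-l)..l, tri l t * cexp (c * t) := by
    rw [intervalIntegral.integral_of_le (by linarith), ← setIntegral_eq_integral_of_forall_compl_eq_zero (s := Set.Ioc (-l) l)]
    · congr 1; ext v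
      rw [smul_eq_mul, mul_comm]; congr 2
      rw [hc]; push_cast; ring
    · intro v hv
      rw [tri_zero hl, smul_zero]
      by_contra h
      push Not at h
      exact hv ⟨(abs_lt.1 h).1, (abs_lt.1 h).2.le⟩
  have hii : ∀ (c : ℂ) (a b : ℝ), IntervalIntegrable (fun t : ℝ => tri l t * cexp (c * t)) volume a b := by
    intro c a b
    apply Continuous.intervalIntegrable
    have := tri_cont l
    fun_prop
  have e1 : ∫ t in (-l)..0, tri l t * cexp (c * t) = ∫ t in (0:ℝ)..l, tri l t * cexp (-c * t) := by
    have := intervalIntegral.integral_comp_neg (a := 0) (b := l) (fun t : ℝ => tri l t * cexp (c * t))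
    rw [neg_zero] at this
    rw [← this]
    congr 1; ext t
    simp [tri]
  rw [e0, ← intervalIntegral.integral_add_adjacent_intervals (hii c (-l) 0) (hii c 0 l), e1]
  by_cases hx : x = 0
  · have : c = 0 := by simp [hc, hx]
    simp only [this, hx, neg_zero, zero_mul, Complex.exp_zero, mul_one, tri_half0 hl]
    simp
  · have hpi : (Real.pi : ℂ) ≠ 0 := by exact_mod_cast Real.pi_ne_zero
    have hx' : (x : ℂ) ≠ 0 := by exact_mod_cast hx
    have hc0 : c ≠ 0 := by
      simp [hc, hx, Real.pi_ne_zero]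
    rw [tri_half hl hc0, tri_half hl (neg_ne_zero.2 hc0), Real.sinc_of_ne_zero (by positivity)]
    push_cast
    have hs : Complex.sin (Real.pi * (l * x)) ^ 2 = (2 - cexp (c * l) - cexp (-c * l)) / 4 := by
      rw [Complex.sin]
      have a1 : cexp (c * l) = cexp (-(Real.pi * (l * x)) * I) ^ 2 := by
        rw [← Complex.exp_nat_mul]; congr 1; rw [hc]; push_cast; ring
      have a2 : cexp (-c * l) = cexp ((Real.pi * (l * x)) * I) ^ 2 := by
        rw [← Complex.exp_nat_mul]; congr 1; rw [hc]; push_cast; ring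
      have a3 : cexp (-(Real.pi * (l * x)) * I) * cexp ((Real.pi * (l * x)) * I) = 1 := by
        rw [← Complex.exp_add]; simp
      rw [a1, a2]
      generalize cexp (-(Real.pi * (l * x)) * I) = p at *
      generalize cexp ((Real.pi * (l * x)) * I) = q at *
      have hI : I ^ 2 = -1 := I_sq
      linear_combination ((p - q) ^ 2 / 4) * hI + (1/2) * a3
    rw [div_pow, hs]
    have hcc : c ^ 2 = -4 * Real.pi ^ 2 * x ^ 2 := by
      rw [hc]; linear_combination (4 * Real.pi ^ 2 * x ^ 2 : ℂ) * I_sq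
    rw [neg_sq, hcc]
    field_simp
    ring

noncomputable def fej (x : ℝ) : ℝ := Real.sinc (Real.pi * x) ^ 2

lemma fej_nonneg (x : ℝ) : 0 ≤ fej x := sq_nonneg _

lemma fej_cont : Continuous fej := by
  unfold fej
  have := Real.continuous_sinc
  fun_prop

lemma fej_integrable : Integrable fej := by
  refine Integrable.mono' (integrable_inv_one_add_sq.const_mul 2) fej_cont.aestronglyMeasurable
    (Eventually.of_forall fun x => ?_)
  rw [Real.norm_of_nonneg (fej_nonneg x), ← div_eq_mul_inv, le_div_iff₀ (by positivity)]
  unfold fej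
  have h1 : Real.sinc (Real.pi * x) ^ 2 ≤ 1 := by
    rw [sq_le_one_iff_abs_le_one]; exact Real.abs_sinc_le_one _
  have h2 : Real.sinc (Real.pi * x) ^ 2 * x ^ 2 ≤ 1 := by
    by_cases hx : x = 0
    · simp [hx]
    · rw [Real.sinc_of_ne_zero (by positivity [Real.pi_pos])]
      have : (Real.sin (Real.pi * x) / (Real.pi * x)) ^ 2 * x ^ 2 = Real.sin (Real.pi * x) ^ 2 / Real.pi ^ 2 := by
        field_simp
      rw [this, div_le_one (by positivity)]
      nlinarith [Real.sin_sq_le_one (Real.pi * x), Real.pi_gt_three]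
  linarith [h1, h2, mul_add (Real.sinc (Real.pi * x) ^ 2) 1 (x^2)]

lemma fej_pos : 0 < ∫ x, fej x := by
  rw [integral_pos_iff_support_of_nonneg fej_nonneg fej_integrable]
  apply IsOpen.measure_pos
  · exact fej_cont.isOpen_support
  · exact ⟨0, by simp [fej]⟩

lemma fej_lower (q : ℝ → ℝ) (hq : Measurable q) (M : ℝ) (hM : ∀ v, |q v| ≤ M) (a m : ℝ)
    (hm : ∀ v ∈ Set.Ioc (-a) a, m ≤ q v) :
    m * (∫ v in Set.Ioc (-a) a, fej v) - M * ((∫ v, fej v) - ∫ v in Set.Ioc (-a) a, fej v) ≤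
      ∫ v, q v * fej v := by
  have hi : Integrable (fun v => q v * fej v) :=
    fej_integrable.bdd_mul hq.aestronglyMeasurable (Eventually.of_forall hM)
  have hc := integral_add_compl (s := Set.Ioc (-a) a) measurableSet_Ioc fej_integrable
  have hc2 := integral_add_compl (s := Set.Ioc (-a) a) measurableSet_Ioc hi
  have h1 : m * (∫ v in Set.Ioc (-a) a, fej v) ≤ ∫ v in Set.Ioc (-a) a, q v * fej v := by
    rw [← integral_const_mul]
    apply setIntegral_mono_on (fej_integrable.const_mul m).integrableOn hi.integrableOn
      measurableSet_Ioc
    intro v hv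
    exact mul_le_mul_of_nonneg_right (hm v hv) (fej_nonneg v)
  have h2 : (-M) * (∫ v in (Set.Ioc (-a) a)ᶜ, fej v) ≤ ∫ v in (Set.Ioc (-a) a)ᶜ, q v * fej v := by
    rw [← integral_const_mul]
    apply setIntegral_mono_on (fej_integrable.const_mul (-M)).integrableOn hi.integrableOn
      measurableSet_Ioc.compl
    intro v hv
    exact mul_le_mul_of_nonneg_right (abs_le.1 (hM v)).1 (fej_nonneg v)
  rw [← hc2, ← hc]
  linarith

lemma fej_kappa : Tendsto (fun a : ℝ => ∫ v in Set.Ioc (-a) a, fej v) atTop (𝓝 (∫ v, fej v)) := by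
  have := intervalIntegral_tendsto_integral fej_integrable tendsto_neg_atTop_atBot tendsto_id
  refine this.congr' ?_
  filter_upwards [eventually_ge_atTop 0] with a ha
  exact intervalIntegral.integral_of_le (by simp only [id]; linarith)

/-- Wiener-Ikehara. -/
theorem wi (P : ℝ → ℝ) (hP : Monotone P) (hP0 : ∀ t, 0 ≤ P t) (C : ℝ)
    (hC : ∀ t, 1 ≤ t → P t ≤ C * t) (A : ℝ) (hA : 0 ≤ A) (H : ℂ → ℂ)
    (hH : ContinuousOn H {s | 1 ≤ s.re})
    (hL : ∀ s : ℂ, 1 < s.re →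
      ∫ t in Set.Ioi (1:ℝ), (P t : ℂ) * (t : ℂ) ^ (-(s + 1)) = H s + A / (s - 1)) :
    Tendsto (fun t => P t / t) atTop (𝓝 A) := by
  have hC0 : 0 ≤ C := by have := hC 1 le_rfl; have := hP0 1; linarith
  set S : ℝ → ℝ := fun u => P (Real.exp u) * Real.exp (-u) with hS
  have hSm : Measurable S := by
    have := hP.measurable
    fun_prop
  have hS0 : ∀ u, 0 ≤ S u := fun u => mul_nonneg (hP0 _) (Real.exp_pos _).le
  have hSC : ∀ u, 0 < u → S u ≤ C := by
    intro u hu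
    have := hC (Real.exp u) (Real.one_le_exp hu.le)
    calc S u ≤ C * Real.exp u * Real.exp (-u) := by simp only [hS]; gcongr
      _ = C := by rw [mul_assoc, ← Real.exp_add]; simp
  set r : ℝ → ℝ := Set.indicator (Set.Ioi 0) (fun u => S u - A) with hr
  have hrm : Measurable r := (hSm.sub_const A).indicator measurableSet_Ioi
  have hrp : ∀ u, 0 < u → r u = S u - A := fun u hu => by simp [hr, hu]
  have hrM : ∀ u, |r u| ≤ C + A := by
    intro u
    by_cases hu : 0 < u
    · rw [hrp u hu, abs_le]
      constructor <;> linarith [hS0 u, hSC u hu]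
    · simp [hr, hu]; linarith
  have hF : ∀ ε : ℝ, 0 < ε → ∀ t : ℝ,
      ∫ u : ℝ, ((r u : ℝ) : ℂ) * cexp (-(ε + 2 * Real.pi * t * I) * u) =
        H (1 + ε + 2 * Real.pi * t * I) := by
    intro ε hε t
    set w : ℂ := ε + 2 * Real.pi * t * I with hw
    have hwre : w.re = ε := by simp [hw]
    have hw0 : w ≠ 0 := by intro h; rw [h] at hwre; simp at hwre; linarith
    have e1 : ∫ u : ℝ, ((r u : ℝ) : ℂ) * cexp (-w * u) =
        ∫ u in Set.Ioi (0:ℝ), ((S u : ℂ) * cexp (-w * u) - A * cexp (-w * u)) := by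
      rw [← integral_indicator measurableSet_Ioi]
      congr 1; ext u
      by_cases hu : 0 < u
      · simp [hr, hu]; ring
      · simp [hr, hu]
    have hei : IntegrableOn (fun u : ℝ => cexp (-w * u)) (Set.Ioi 0) :=
      integrableOn_exp_mul_complex_Ioi (by simp [hwre, hε]) 0
    have hSi : IntegrableOn (fun u : ℝ => (S u : ℂ) * cexp (-w * u)) (Set.Ioi 0) := by
      refine Integrable.bdd_mul (c := C) hei ?_ ?_
      · exact (Complex.measurable_ofReal.comp hSm).aestronglyMeasurable
      · refine (ae_restrict_iff' measurableSet_Ioi).2 (Eventually.of_forall fun u hu => ?_)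
        rw [Complex.norm_real, Real.norm_of_nonneg (hS0 u)]
        exact hSC u hu
    have e2 : ∫ u in Set.Ioi (0:ℝ), (S u : ℂ) * cexp (-w * u) = H (1 + w) + A / w := by
      have := hL (1 + w) (by simp [hwre, hε])
      rw [add_sub_cancel_left] at this
      rw [← this, ← Real.exp_zero, ← integral_comp_exp_Ioi]
      apply setIntegral_congr_fun measurableSet_Ioi
      intro u hu
      have hne : ((Real.exp u : ℝ) : ℂ) ≠ 0 := by exact_mod_cast (Real.exp_pos u).ne'
      simp only [hS, real_smul]
      rw [Complex.cpow_def_of_ne_zero hne, ← Complex.ofReal_log (Real.exp_pos u).le, Real.log_exp]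
      push_cast
      rw [mul_left_comm, mul_assoc, ← Complex.exp_add, ← Complex.exp_add]
      congr 2; ring
    rw [e1, integral_sub hSi (hei.const_mul _), e2, integral_const_mul,
      integral_exp_mul_complex_Ioi (by simp [hwre, hε])]
    simp
    rw [hw]
    field_simp
    ring_nf
  -- limit
  have hW : ∀ l : ℝ, 0 < l → Tendsto (fun y : ℝ => ∫ v, r (y + v / l) * fej v) atTop (𝓝 0) := by
    intro l hl
    have hFT : ∀ x, 𝓕 (tri l) x = ((l * fej (l * x) : ℝ) : ℂ) := fun x => tri_fourier hl x
    have hKi : Integrable (𝓕 (tri l)) := by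
      rw [funext hFT]
      exact ((fej_integrable.comp_mul_left' hl.ne').const_mul l).ofReal
    have h := wi_limit (fun u => ((r u : ℝ) : ℂ)) (Complex.measurable_ofReal.comp hrm) (C + A)
      (fun u => by rw [Complex.norm_real]; exact hrM u) (fun u hu => by simp [hr, hu]) H hH hF
      (tri l) (tri_cont l) (tri_supp hl) hKi
    have e : ∀ y : ℝ, ∫ u : ℝ, ((r u : ℝ) : ℂ) * 𝓕 (tri l) (u - y) =
        ((∫ v, r (y + v / l) * fej v : ℝ) : ℂ) := by
      intro y
      simp_rw [hFT, ← Complex.ofReal_mul]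
      rw [integral_complex_ofReal]
      congr 1
      have a1 := integral_sub_right_eq_self (μ := volume)
        (fun x => r (y + x) * (l * fej (l * x))) y
      have a2 := Measure.integral_comp_mul_left (fun v => r (y + v / l) * fej v) l
      rw [abs_of_pos (inv_pos.2 hl)] at a2
      have a3 : ∀ x, y + l * x / l = y + x := fun x => by field_simp
      simp only [a3, smul_eq_mul] at a2
      calc ∫ u, r u * (l * fej (l * (u - y))) = ∫ u, r (y + (u - y)) * (l * fej (l * (u - y))) := by
            congr 1; ext u; congr 2; ring
        _ = ∫ x, r (y + x) * (l * fej (l * x)) := a1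
        _ = ∫ x, l * (r (y + x) * fej (l * x)) := by congr 1; ext x; ring
        _ = _ := by rw [integral_const_mul, a2]; field_simp
    simp_rw [e] at h
    rw [← Complex.ofReal_zero] at h
    exact tendsto_ofReal_iff.1 h
  set J := ∫ v, fej v with hJ
  have hJ0 : 0 < J := fej_pos
  -- main claim
  have main : ∀ δ : ℝ, 0 < δ → ∀ᶠ z in atTop,
      S z * Real.exp (-δ) - A ≤ δ ∧ -δ ≤ S z * Real.exp δ - A := by
    intro δ hδ
    have hk : ∀ᶠ a : ℝ in atTop,
        (C + A) * (J - ∫ v in Set.Ioc (-a) a, fej v) < (δ / 2) * ∫ v in Set.Ioc (-a) a, fej v := by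
      have t1 : Tendsto (fun a : ℝ => (C + A) * (J - ∫ v in Set.Ioc (-a) a, fej v)) atTop
          (𝓝 ((C + A) * (J - J))) := (fej_kappa.const_sub J).const_mul _
      have t2 : Tendsto (fun a : ℝ => (δ / 2) * ∫ v in Set.Ioc (-a) a, fej v) atTop
          (𝓝 ((δ / 2) * J)) := fej_kappa.const_mul _
      apply t1.eventually_lt t2
      rw [sub_self, mul_zero]; positivity
    obtain ⟨a, ha, ha0, hk0⟩ := (hk.and ((eventually_gt_atTop (0:ℝ)).and
      (fej_kappa.eventually (lt_mem_nhds hJ0)))).exists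
    set κ := ∫ v in Set.Ioc (-a) a, fej v with hκ
    set l := 2 * a / δ with hl
    have hl0 : 0 < l := by positivity
    have hWl := hW l hl0
    have hη : 0 < δ / 2 * κ := by positivity
    have hb : ∀ v ∈ Set.Ioc (-a) a, -(δ/2) ≤ v / l ∧ v / l ≤ δ / 2 := by
      intro v hv
      have : v / l = (v / a) * (δ / 2) := by rw [hl]; field_simp
      rw [this]
      have h1 : v / a ≤ 1 := (div_le_one ha0).2 hv.2
      have h2 : -1 ≤ v / a := by rw [le_div_iff₀ ha0]; linarith [hv.1]
      constructor <;> nlinarith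
    have hqm : ∀ y, Measurable (fun v => r (y + v / l)) := fun y => hrm.comp (by fun_prop)
    have hup := (hWl.eventually (gt_mem_nhds hη))
    have hlo := (hWl.eventually (lt_mem_nhds (neg_lt_zero.2 hη)))
    have t1 : Tendsto (fun z : ℝ => z + δ / 2) atTop atTop := tendsto_atTop_add_const_right _ _ tendsto_id
    have t2 : Tendsto (fun z : ℝ => z - δ / 2) atTop atTop := by
      simpa [sub_eq_add_neg] using tendsto_atTop_add_const_right atTop (-(δ/2)) tendsto_id
    filter_upwards [t1.eventually hup, t2.eventually hlo, eventually_gt_atTop δ] with z h1 h2 hz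
    constructor
    · have := fej_lower _ (hqm (z + δ / 2)) (C + A) (fun v => hrM _) a
        (S z * Real.exp (-δ) - A) (by
          intro v hv
          obtain ⟨b1, b2⟩ := hb v hv
          rw [hrp _ (by linarith)]
          gcongr
          simp only [hS]
          rw [mul_assoc, ← Real.exp_add]
          gcongr
          · exact hP0 _
          · apply hP; gcongr; linarith
          · linarith)
      have h3 : (S z * Real.exp (-δ) - A) * κ ≤ δ * κ := by linarith
      exact le_of_mul_le_mul_right h3 hk0
    · have := fej_lower _ (hqm (z - δ / 2)).neg (C + A) (fun v => by simpa using hrM _) a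
        (-(S z * Real.exp δ - A)) (by
          intro v hv
          obtain ⟨b1, b2⟩ := hb v hv
          simp only [Pi.neg_apply]
          rw [hrp _ (by linarith), neg_le_neg_iff]
          gcongr
          simp only [hS]
          rw [mul_assoc, ← Real.exp_add]
          gcongr
          · exact hP0 _
          · apply hP; gcongr; linarith
          · linarith)
      simp only [Pi.neg_apply, neg_mul, integral_neg] at this
      have h3 : (-δ) * κ ≤ (S z * Real.exp δ - A) * κ := by linarith
      exact le_of_mul_le_mul_right h3 hk0
  have hSlim : Tendsto S atTop (𝓝 A) := by
    rw [tendsto_order]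
    constructor
    · intro b hb
      have hc : Tendsto (fun δ : ℝ => Real.exp (-δ) * (A - δ)) (𝓝[>] 0) (𝓝 A) := by
        have : Continuous (fun δ : ℝ => Real.exp (-δ) * (A - δ)) := by fun_prop
        simpa using (this.tendsto 0).mono_left (nhdsWithin_le_nhds (s := Set.Ioi 0))
      obtain ⟨δ, hδ, hδ0⟩ := ((hc.eventually (lt_mem_nhds hb)).and self_mem_nhdsWithin).exists
      filter_upwards [main δ hδ0] with z hz
      have : Real.exp (-δ) * (A - δ) ≤ Real.exp (-δ) * (S z * Real.exp δ) := by
        gcongr; linarith [hz.2]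
      rw [mul_left_comm, ← Real.exp_add] at this
      simp at this
      linarith
    · intro b hb
      have hc : Tendsto (fun δ : ℝ => Real.exp δ * (A + δ)) (𝓝[>] 0) (𝓝 A) := by
        have : Continuous (fun δ : ℝ => Real.exp δ * (A + δ)) := by fun_prop
        simpa using (this.tendsto 0).mono_left (nhdsWithin_le_nhds (s := Set.Ioi 0))
      obtain ⟨δ, hδ, hδ0⟩ := ((hc.eventually (gt_mem_nhds hb)).and self_mem_nhdsWithin).exists
      filter_upwards [main δ hδ0] with z hz
      have : Real.exp δ * (S z * Real.exp (-δ)) ≤ Real.exp δ * (A + δ) := by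
        gcongr; linarith [hz.1]
      rw [mul_left_comm, ← Real.exp_add] at this
      simp at this
      linarith
  refine (hSlim.comp Real.tendsto_log_atTop).congr' ?_
  filter_upwards [eventually_gt_atTop 0] with t ht
  simp [hS, Real.exp_neg, Real.exp_log ht, div_eq_mul_inv]

theorem psiAP (d : ℕ) [NeZero d] :
    Tendsto (fun t : ℝ => (∑ k ∈ Finset.Icc 1 ⌊t⌋₊,
      ArithmeticFunction.vonMangoldt.residueClass (1 : ZMod d) k) / t) atTop
      (𝓝 (1 / (d.totient : ℝ))) := by
  have h0 : ∀ k, 0 ≤ ArithmeticFunction.vonMangoldt.residueClass (1 : ZMod d) k :=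
    fun k => ArithmeticFunction.vonMangoldt.residueClass_nonneg _ k
  have hbd : ∀ t : ℝ, 0 ≤ t → (∑ k ∈ Finset.Icc 1 ⌊t⌋₊,
      ArithmeticFunction.vonMangoldt.residueClass (1 : ZMod d) k) ≤ (Real.log 4 + 4) * t := by
    intro t ht
    refine le_trans ?_ (Chebyshev.psi_le_const_mul_self ht)
    unfold Chebyshev.psi
    exact Finset.sum_le_sum fun k _ => ArithmeticFunction.vonMangoldt.residueClass_le _ k
  have hc4 : 0 ≤ Real.log 4 + 4 := by have := Real.log_nonneg (show (1:ℝ) ≤ 4 by norm_num); linarith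
  refine wi _ ?_ ?_ (Real.log 4 + 4) ?_ _ (by positivity)
    (fun s => (ArithmeticFunction.vonMangoldt.LFunctionResidueClassAux (1 : ZMod d) s
      - (d.totient : ℂ)⁻¹) / s) ?_ ?_
  · intro x y hxy
    apply Finset.sum_le_sum_of_subset_of_nonneg
    · exact Finset.Icc_subset_Icc le_rfl (Nat.floor_le_floor hxy)
    · intro i _ _; exact h0 i
  · intro t; exact Finset.sum_nonneg fun k _ => h0 k
  · intro t ht; exact hbd t (by linarith)
  · apply ContinuousOn.div
    · exact (ArithmeticFunction.vonMangoldt.continuousOn_LFunctionResidueClassAux _).sub continuousOn_const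
    · exact continuousOn_id
    · intro s hs h
      rw [h] at hs
      simp at hs
      linarith
  · intro s hs
    have hs0 : s ≠ 0 := by intro h; rw [h] at hs; simp at hs; linarith
    have hs1 : s - 1 ≠ 0 := by
      intro h; rw [sub_eq_zero.1 h] at hs; simp at hs
    have hL := LSeries_eq_mul_integral_of_nonneg
      (ArithmeticFunction.vonMangoldt.residueClass (1 : ZMod d)) (r := 1) zero_le_one hs
      (by
        refine Asymptotics.IsBigO.of_bound (Real.log 4 + 4) (Eventually.of_forall fun n => ?_)
        rw [Real.norm_of_nonneg (Finset.sum_nonneg fun k _ => h0 k), Real.rpow_one,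
          Real.norm_of_nonneg (by positivity)]
        simpa using hbd n (by positivity)) h0
    have hE := ArithmeticFunction.vonMangoldt.eqOn_LFunctionResidueClassAux
      (q := d) (a := 1) isUnit_one hs
    simp only at hE
    push_cast
    rw [hE, hL]
    generalize (∫ t in Set.Ioi (1:ℝ), _ : ℂ) = X
    have ht : (d.totient : ℂ) ≠ 0 := by
      exact_mod_cast (Nat.totient_pos.2 (NeZero.pos d)).ne'
    field_simp
    ring

lemma sqrt_log_small : Tendsto (fun n : ℕ => 2 * Real.sqrt n * Real.log n / n) atTop (𝓝 0) := by
  have h := (isLittleO_log_rpow_atTop (show (0:ℝ) < 1/2 by norm_num)).tendsto_div_nhds_zero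
  have h2 := (h.comp (tendsto_natCast_atTop_atTop (R := ℝ))).const_mul 2
  rw [mul_zero] at h2
  refine h2.congr' ?_
  filter_upwards [eventually_gt_atTop 0] with n hn
  have hn' : (0:ℝ) < n := by exact_mod_cast hn
  have hs : 0 < Real.sqrt n := Real.sqrt_pos.2 hn'
  simp only [Function.comp]
  rw [← Real.sqrt_eq_rpow]
  have : (n:ℝ) = Real.sqrt n * Real.sqrt n := (Real.mul_self_sqrt hn'.le).symm
  rw [eq_div_iff hn'.ne']
  nth_rewrite 3 [this]
  field_simp

lemma thetaAP (d : ℕ) [NeZero d] :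
    Tendsto (fun n : ℕ => (∑ k ∈ Finset.range (n + 1),
      (if k.Prime ∧ d ∣ (k - 1) then Real.log k else 0)) / n) atTop
      (𝓝 (1 / (d.totient : ℝ))) := by
  have h1 := (psiAP d).comp (tendsto_natCast_atTop_atTop (R := ℝ))
  simp only [Function.comp_def, Nat.floor_natCast] at h1
  have key : ∀ n : ℕ, 1 ≤ n →
      |(∑ k ∈ Finset.Icc 1 n, ArithmeticFunction.vonMangoldt.residueClass (1 : ZMod d) k) -
      (∑ k ∈ Finset.range (n + 1), (if k.Prime ∧ d ∣ (k - 1) then Real.log k else 0))| ≤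
      2 * Real.sqrt n * Real.log n := by
    intro n hn
    have e : (∑ k ∈ Finset.range (n + 1), (if k.Prime ∧ d ∣ (k - 1) then Real.log k else 0)) =
        ∑ k ∈ Finset.Icc 1 n, (if k.Prime ∧ d ∣ (k - 1) then Real.log k else 0) := by
      symm
      apply Finset.sum_subset
      · intro k hk; simp at hk ⊢; omega
      · intro k hk hk'
        have : k = 0 := by simp at hk hk'; omega
        simp [this, Nat.not_prime_zero]
    have hp := Chebyshev.psi_sub_theta_le (x := n) (by exact_mod_cast hn)
    rw [Chebyshev.psi_sub_theta_eq_sum_not_prime, Nat.floor_natCast, Finset.sum_filter] at hp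
    change ∑ k ∈ Finset.Icc 1 n, _ ≤ _ at hp
    rw [e, ← Finset.sum_sub_distrib]
    have pt : ∀ k ∈ Finset.Icc 1 n,
        ArithmeticFunction.vonMangoldt.residueClass (1 : ZMod d) k -
          (if k.Prime ∧ d ∣ (k - 1) then Real.log k else 0) =
        if ¬ k.Prime then ArithmeticFunction.vonMangoldt.residueClass (1 : ZMod d) k else 0 := by
      intro k hk
      have hk1 : 1 ≤ k := (Finset.mem_Icc.1 hk).1
      have hiff : ((k : ZMod d) = 1) ↔ d ∣ (k - 1) := by
        rw [← Nat.modEq_iff_dvd' hk1, ← ZMod.natCast_eq_natCast_iff, Nat.cast_one, eq_comm]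
      by_cases hkp : k.Prime
      · by_cases hkd : d ∣ (k - 1)
        · simp [hkp, hkd, hiff.2 hkd,
            ArithmeticFunction.vonMangoldt_apply_prime hkp]
        · simp [hkp, hkd, hiff]
      · simp [hkp]
    rw [Finset.sum_congr rfl pt, abs_of_nonneg]
    · refine le_trans (Finset.sum_le_sum fun k _ => ?_) hp
      split_ifs
      · exact le_rfl
      · exact ArithmeticFunction.vonMangoldt.residueClass_le _ k
    · apply Finset.sum_nonneg
      intro k _
      split_ifs
      · exact le_rfl
      · exact ArithmeticFunction.vonMangoldt.residueClass_nonneg _ k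
  have h2 : Tendsto (fun n : ℕ =>
      (∑ k ∈ Finset.Icc 1 n, ArithmeticFunction.vonMangoldt.residueClass (1 : ZMod d) k) / (n:ℝ) -
      (∑ k ∈ Finset.range (n + 1), (if k.Prime ∧ d ∣ (k - 1) then Real.log k else 0)) / n)
      atTop (𝓝 0) := by
    refine squeeze_zero_norm' ?_ sqrt_log_small
    filter_upwards [eventually_ge_atTop 1] with n hn
    rw [← sub_div, norm_div, Real.norm_eq_abs, Real.norm_natCast]
    gcongr
    exact key n hn
  have h3 := h1.sub h2
  simp only [sub_sub_cancel, sub_zero] at h3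
  exact h3

lemma abel_id (x w : ℕ → ℝ) (n : ℕ) :
    ∑ k ∈ Finset.range (n + 1), x k * w k =
      (∑ k ∈ Finset.range (n + 1), x k) * w n +
      ∑ j ∈ Finset.range n, (∑ k ∈ Finset.range (j + 1), x k) * (w j - w (j + 1)) := by
  induction n with
  | zero => simp
  | succ n ih =>
    rw [Finset.sum_range_succ, ih, Finset.sum_range_succ x (n + 1),
      Finset.sum_range_succ (fun j => (∑ k ∈ Finset.range (j + 1), x k) * (w j - w (j + 1))) n]
    ring

lemma little_bound (T g : ℕ → ℝ) (hT : Tendsto (fun n => T n / g n) atTop (𝓝 0))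
    (N : ℕ) (hg : ∀ n, N ≤ n → 0 < g n) (ε : ℝ) (hε : 0 < ε) :
    ∃ K : ℝ, 0 ≤ K ∧ ∀ n, |T n| ≤ K ∨ (N ≤ n ∧ |T n| ≤ ε * g n) := by
  have h1 : ∀ᶠ n in atTop, |T n / g n| < ε := by
    have := hT.abs
    rw [abs_zero] at this
    exact this.eventually (gt_mem_nhds hε)
  obtain ⟨N0, hN0⟩ := eventually_atTop.1 h1
  refine ⟨∑ k ∈ Finset.range (max N N0), |T k|, Finset.sum_nonneg fun _ _ => abs_nonneg _, fun n => ?_⟩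
  by_cases hn : n < max N N0
  · left
    exact Finset.single_le_sum (f := fun k => |T k|) (fun _ _ => abs_nonneg _) (Finset.mem_range.2 hn)
  · right
    have hnN : N ≤ n := le_trans (le_max_left _ _) (not_lt.1 hn)
    have hnN0 : N0 ≤ n := le_trans (le_max_right _ _) (not_lt.1 hn)
    refine ⟨hnN, ?_⟩
    have := hN0 n hnN0
    rw [abs_div, abs_of_pos (hg n hnN), div_lt_iff₀ (hg n hnN)] at this
    exact this.le

lemma abel_log (e : ℕ → ℝ) (he0 : e 0 = 0) (he1 : e 1 = 0)
    (hT : Tendsto (fun n : ℕ => (∑ k ∈ Finset.range (n + 1), e k * Real.log k) / n) atTop (𝓝 0)) :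
    Tendsto (fun n : ℕ => (∑ k ∈ Finset.range (n + 1), e k) / (n / Real.log n)) atTop (𝓝 0) := by
  set T : ℕ → ℝ := fun n => ∑ k ∈ Finset.range (n + 1), e k * Real.log k with hTdef
  set w : ℕ → ℝ := fun k => 1 / Real.log (max k 2 : ℕ) with hw
  have hlogpos : ∀ k : ℕ, 0 < Real.log (max k 2 : ℕ) := fun k => by
    apply Real.log_pos
    have : 2 ≤ max k 2 := le_max_right _ _
    exact_mod_cast this
  have hw0 : ∀ k, 0 < w k := fun k => by simp only [hw]; exact one_div_pos.2 (hlogpos k)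
  have hwanti : Antitone w := by
    intro i j hij
    simp only [hw]
    apply one_div_le_one_div_of_le (hlogpos i)
    apply Real.log_le_log
    · have : 0 < max i 2 := by omega
      exact_mod_cast this
    · have : max i 2 ≤ max j 2 := by omega
      exact_mod_cast this
  have hsum : ∀ n, ∑ k ∈ Finset.range (n + 1), e k = T n * w n +
      ∑ j ∈ Finset.range n, T j * (w j - w (j + 1)) := by
    intro n
    rw [← abel_id (fun k => e k * Real.log k) w n]
    apply Finset.sum_congr rfl
    intro k _
    rcases Nat.lt_or_ge k 2 with hk | hk
    · interval_cases k <;> simp [he0, he1]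
    · have h2 : max k 2 = k := max_eq_left hk
      have := hlogpos k
      simp only [hw]
      rw [h2] at this ⊢
      field_simp
  have bound : ∀ ε : ℝ, 0 < ε → ∃ K : ℝ, 0 ≤ K ∧ ∀ n : ℕ, 2 ≤ n →
      |∑ k ∈ Finset.range (n + 1), e k| ≤
        3 * ((K + ε * n) / Real.log n) + (K + ε * Real.sqrt n) * w 0 := by
    intro ε hε
    obtain ⟨K, hK0, hK⟩ := little_bound T (fun n => (n:ℝ)) hT 1
      (fun n hn => by exact_mod_cast hn) ε hε
    have hTb : ∀ k : ℕ, |T k| ≤ K + ε * k := by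
      intro k
      have : 0 ≤ ε * k := by positivity
      rcases hK k with h | ⟨_, h⟩ <;> linarith
    refine ⟨K, hK0, fun n hn => ?_⟩
    have hnlog : 0 < Real.log n := Real.log_pos (by exact_mod_cast hn)
    rw [hsum]
    have hwn : w n = 1 / Real.log n := by simp only [hw]; rw [max_eq_left hn]
    set m := Nat.sqrt n with hm
    have hm1 : m + 1 ≤ n := by
      have := Nat.sqrt_lt_self hn
      omega
    have hwm : w (m + 1) ≤ 2 / Real.log n := by
      have h1 : n < (m + 1) * (m + 1) := Nat.lt_succ_sqrt n
      have h2 : Real.log n ≤ 2 * Real.log (max (m + 1) 2 : ℕ) := by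
        rw [← Real.log_rpow (by have : 0 < max (m+1) 2 := by omega
                                exact_mod_cast this)]
        apply Real.log_le_log (by positivity)
        rw [Real.rpow_two]
        have : n ≤ (max (m + 1) 2) ^ 2 := by
          have : m + 1 ≤ max (m+1) 2 := le_max_left _ _
          nlinarith
        exact_mod_cast this
      have h3 := hlogpos (m + 1)
      simp only [hw]
      rw [div_le_div_iff₀ h3 hnlog]
      linarith
    have hd : ∀ j, 0 ≤ w j - w (j + 1) := fun j => sub_nonneg.2 (hwanti (Nat.le_succ j))
    have tele : ∀ a, ∑ j ∈ Finset.range a, (w j - w (j + 1)) = w 0 - w a := fun a =>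
      Finset.sum_range_sub' w a
    have hs1 : |∑ j ∈ Finset.range (m + 1), T j * (w j - w (j + 1))| ≤ (K + ε * Real.sqrt n) * w 0 := by
      refine (Finset.abs_sum_le_sum_abs _ _).trans ?_
      calc ∑ j ∈ Finset.range (m + 1), |T j * (w j - w (j + 1))|
          ≤ ∑ j ∈ Finset.range (m + 1), (K + ε * Real.sqrt n) * (w j - w (j + 1)) := by
            apply Finset.sum_le_sum
            intro j hj
            rw [abs_mul, abs_of_nonneg (hd j)]
            apply mul_le_mul_of_nonneg_right _ (hd j)
            refine (hTb j).trans ?_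
            gcongr
            apply Real.le_sqrt_of_sq_le
            have h1 : j ≤ m := by simp at hj; omega
            have h2 : m * m ≤ n := Nat.sqrt_le n
            have : j ^ 2 ≤ n := by nlinarith
            exact_mod_cast this
        _ = (K + ε * Real.sqrt n) * (w 0 - w (m + 1)) := by rw [← Finset.mul_sum, tele]
        _ ≤ (K + ε * Real.sqrt n) * w 0 := by
            gcongr
            linarith [hw0 (m + 1)]
    have hs2 : |∑ j ∈ Finset.Ico (m + 1) n, T j * (w j - w (j + 1))| ≤ (K + ε * n) * (2 / Real.log n) := by
      refine (Finset.abs_sum_le_sum_abs _ _).trans ?_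
      calc ∑ j ∈ Finset.Ico (m + 1) n, |T j * (w j - w (j + 1))|
          ≤ ∑ j ∈ Finset.Ico (m + 1) n, (K + ε * n) * (w j - w (j + 1)) := by
            apply Finset.sum_le_sum
            intro j hj
            rw [abs_mul, abs_of_nonneg (hd j)]
            apply mul_le_mul_of_nonneg_right _ (hd j)
            refine (hTb j).trans ?_
            gcongr
            exact (Finset.mem_Ico.1 hj).2.le
        _ = (K + ε * n) * (w (m + 1) - w n) := by
            rw [← Finset.mul_sum, Finset.sum_Ico_eq_sub _ hm1, tele, tele]; ring
        _ ≤ (K + ε * n) * (2 / Real.log n) := by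
            gcongr
            linarith [hw0 n]
    have hs0 : |T n * w n| ≤ (K + ε * n) / Real.log n := by
      rw [abs_mul, abs_of_pos (hw0 n), hwn, mul_one_div]
      gcongr
      exact hTb n
    rw [← Finset.sum_range_add_sum_Ico _ hm1]
    have t1 := abs_add_le (T n * w n) (∑ j ∈ Finset.range (m + 1), T j * (w j - w (j + 1)) +
      ∑ j ∈ Finset.Ico (m + 1) n, T j * (w j - w (j + 1)))
    have t2 := abs_add_le (∑ j ∈ Finset.range (m + 1), T j * (w j - w (j + 1)))
      (∑ j ∈ Finset.Ico (m + 1) n, T j * (w j - w (j + 1)))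
    have t3 : (K + ε * n) * (2 / Real.log n) = 2 * ((K + ε * n) / Real.log n) := by ring
    linarith
  rw [Metric.tendsto_atTop']
  have hgoal : ∀ η : ℝ, 0 < η → ∀ᶠ n : ℕ in atTop,
      |(∑ k ∈ Finset.range (n + 1), e k) / (n / Real.log n)| < η := by
    intro η hη
    obtain ⟨K, hK0, hK⟩ := bound (η / 6) (by positivity)
    have l1 : Tendsto (fun n : ℕ => 3 * K / (n:ℝ)) atTop (𝓝 0) :=
      tendsto_const_div_atTop_nhds_zero_nat _
    have l2 : Tendsto (fun n : ℕ => (K + η / 6) * w 0 * (2 * Real.sqrt n * Real.log n / n)) atTop (𝓝 0) := by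
      simpa using sqrt_log_small.const_mul ((K + η / 6) * w 0)
    have l3 := l1.add l2
    rw [add_zero] at l3
    filter_upwards [l3.eventually (gt_mem_nhds (show 0 < η / 2 by positivity)),
      eventually_ge_atTop 2] with n hn hn2
    have hnlog : 0 < Real.log n := Real.log_pos (by exact_mod_cast hn2)
    have hn0 : (0:ℝ) < n := by positivity
    have hpos : 0 < (n:ℝ) / Real.log n := by positivity
    rw [abs_div, abs_of_pos hpos, div_lt_iff₀ hpos]
    refine (hK n hn2).trans_lt ?_
    have hs1 : 1 ≤ Real.sqrt n := by
      rw [Real.one_le_sqrt]; exact_mod_cast (by omega : 1 ≤ n)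
    have h5 : (K + η / 6 * Real.sqrt n) * w 0 ≤ (K + η / 6) * w 0 * (2 * Real.sqrt n) := by
      have : K + η / 6 * Real.sqrt n ≤ (K + η / 6) * (2 * Real.sqrt n) := by nlinarith
      calc _ ≤ (K + η / 6) * (2 * Real.sqrt n) * w 0 := by
            have := hw0 0; gcongr
        _ = _ := by ring
    have h6 := mul_lt_mul_of_pos_right hn hpos
    have h7 : (3 * K / (n:ℝ) + (K + η / 6) * w 0 * (2 * Real.sqrt n * Real.log n / n)) *
        (n / Real.log n) = 3 * (K / Real.log n) + (K + η / 6) * w 0 * (2 * Real.sqrt n) := by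
      field_simp
    have h8 : 3 * ((K + η / 6 * n) / Real.log n) = 3 * (K / Real.log n) + η / 2 * (n / Real.log n) := by
      ring
    rw [h7] at h6
    rw [h8]
    nlinarith
  intro η hη
  obtain ⟨N, hN⟩ := eventually_atTop.1 (hgoal η hη)
  exact ⟨N, fun n hn => by rw [Real.dist_eq, sub_zero]; exact hN n hn.le⟩

lemma abel_pow (e : ℕ → ℝ) (m : ℕ)
    (hU : Tendsto (fun n : ℕ => (∑ k ∈ Finset.range (n + 1), e k) / (n / Real.log n)) atTop (𝓝 0))
    (ε : ℝ) (hε : 0 < ε) :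
    ∃ K : ℝ, 0 ≤ K ∧ ∀ n : ℕ, 3 ≤ n → |∑ k ∈ Finset.range (n + 1), e k * (k:ℝ) ^ m| ≤
      2 * (K + ε * (n / Real.log n)) * (n:ℝ) ^ m := by
  set U : ℕ → ℝ := fun n => ∑ k ∈ Finset.range (n + 1), e k with hUdef
  have hg : ∀ n : ℕ, 3 ≤ n → 0 < (n:ℝ) / Real.log n := by
    intro n hn
    have : 0 < Real.log n := Real.log_pos (by exact_mod_cast (by omega : 1 < n))
    positivity
  obtain ⟨K, hK0, hK⟩ := little_bound U (fun n => (n:ℝ) / Real.log n) hU 3 hg ε hε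
  refine ⟨K, hK0, fun n hn => ?_⟩
  have hB : ∀ k, k ≤ n → |U k| ≤ K + ε * (n / Real.log n) := by
    intro k hkn
    have hgn := hg n hn
    rcases hK k with h | ⟨h3, h⟩
    · have : 0 ≤ ε * (n / Real.log n) := by positivity
      linarith
    · have he3 : Real.exp 1 ≤ 3 := by have := Real.exp_one_lt_d9; linarith
      have hk3 : (3:ℝ) ≤ k := by exact_mod_cast h3
      have hn3 : (3:ℝ) ≤ n := by exact_mod_cast hn
      have this : Real.log n / n ≤ Real.log k / k := Real.log_div_self_antitoneOn (a := (k:ℝ)) (b := (n:ℝ)) (by simp; linarith)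
        (by simp; linarith) (by exact_mod_cast hkn)
      have h4 : (k:ℝ) / Real.log k ≤ n / Real.log n := by
        rw [← inv_div, ← inv_div (Real.log n)]
        apply inv_anti₀ _ this
        rw [← inv_div]
        exact inv_pos.2 hgn
      calc |U k| ≤ ε * (k / Real.log k) := h
        _ ≤ ε * (n / Real.log n) := by gcongr
        _ ≤ _ := by linarith
  set B := K + ε * (n / Real.log n) with hBdef
  have hB0 : 0 ≤ B := (abs_nonneg _).trans (hB n le_rfl)
  rw [abel_id e (fun k => (k:ℝ) ^ m) n]
  have h1 : |U n * (n:ℝ) ^ m| ≤ B * (n:ℝ) ^ m := by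
    rw [abs_mul, abs_of_nonneg (by positivity : (0:ℝ) ≤ (n:ℝ) ^ m)]
    gcongr
    exact hB n le_rfl
  have h2 : |∑ j ∈ Finset.range n, U j * ((j:ℝ) ^ m - ((j + 1 : ℕ) : ℝ) ^ m)| ≤ B * (n:ℝ) ^ m := by
    refine (Finset.abs_sum_le_sum_abs _ _).trans ?_
    calc ∑ j ∈ Finset.range n, |U j * ((j:ℝ) ^ m - ((j + 1 : ℕ) : ℝ) ^ m)|
        ≤ ∑ j ∈ Finset.range n, B * (((j + 1 : ℕ) : ℝ) ^ m - (j:ℝ) ^ m) := by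
          apply Finset.sum_le_sum
          intro j hj
          have hmono : (j:ℝ) ^ m ≤ ((j + 1 : ℕ) : ℝ) ^ m := by
            gcongr; omega
          rw [abs_mul, abs_sub_comm, abs_of_nonneg (sub_nonneg.2 hmono)]
          apply mul_le_mul_of_nonneg_right _ (sub_nonneg.2 hmono)
          exact hB j (Finset.mem_range.1 hj).le
      _ = B * ((n:ℝ) ^ m - ((0:ℕ):ℝ) ^ m) := by
          rw [← Finset.mul_sum, Finset.sum_range_sub (fun j : ℕ => (j:ℝ) ^ m) n]
      _ ≤ B * (n:ℝ) ^ m := by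
          gcongr
          have : (0:ℝ) ≤ ((0:ℕ):ℝ) ^ m := by positivity
          linarith
  have h3 := abs_add_le (U n * (n:ℝ) ^ m)
    (∑ j ∈ Finset.range n, U j * ((j:ℝ) ^ m - ((j + 1 : ℕ) : ℝ) ^ m))
  simp only [hUdef] at h1 h2 h3
  linarith

lemma theta_one_lim : Tendsto (fun n : ℕ => (∑ k ∈ Finset.range (n + 1),
      (if k.Prime then Real.log k else 0)) / n) atTop (𝓝 1) := by
  have := thetaAP 1
  simpa using this

lemma denom_lower (m : ℕ) : ∀ᶠ n : ℕ in atTop,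
    ((n:ℝ) / 8) ^ m * (n / 4) / Real.log n ≤
      ∑ k ∈ Finset.range (n + 1), (if k.Prime then (k:ℝ) ^ m else 0) := by
  filter_upwards [theta_one_lim.eventually (lt_mem_nhds (show (1/2:ℝ) < 1 by norm_num)),
    eventually_ge_atTop 3] with n hn hn3
  have hn0 : (0:ℝ) < n := by positivity
  have hlog : 0 < Real.log n := Real.log_pos (by exact_mod_cast (by omega : 1 < n))
  rw [lt_div_iff₀ hn0] at hn
  have hth := Chebyshev.theta_le_log4_mul_x (x := (n:ℝ) / 8) (by positivity)
  have hlog4 : Real.log 4 ≤ 2 := by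
    rw [show (4:ℝ) = 2 ^ 2 by norm_num, Real.log_pow]
    have := Real.log_two_lt_d9
    push_cast; linarith
  have hth2 : Chebyshev.theta ((n:ℝ) / 8) ≤ n / 4 := by nlinarith
  have heq : Chebyshev.theta ((n:ℝ) / 8) = ∑ k ∈ Finset.range (n + 1),
      (if k.Prime ∧ (k:ℝ) ≤ n / 8 then Real.log k else 0) := by
    unfold Chebyshev.theta
    rw [← Finset.sum_filter]
    apply Finset.sum_congr _ fun _ _ => rfl
    ext k
    simp only [Finset.mem_filter, Finset.mem_Ioc, Finset.mem_range]
    rw [Nat.le_floor_iff (by positivity)]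
    constructor
    · rintro ⟨⟨_, h2⟩, h3⟩
      refine ⟨?_, h3, h2⟩
      have : (k:ℝ) < ((n + 1 : ℕ) : ℝ) := by push_cast; linarith
      exact_mod_cast this
    · rintro ⟨_, h3, h2⟩
      exact ⟨⟨h3.pos, h2⟩, h3⟩
  rw [div_le_iff₀ hlog, Finset.sum_mul]
  calc ((n:ℝ) / 8) ^ m * (n / 4) ≤ ((n:ℝ) / 8) ^ m * (∑ k ∈ Finset.range (n + 1),
      ((if k.Prime then Real.log k else 0) -
        (if k.Prime ∧ (k:ℝ) ≤ n / 8 then Real.log k else 0))) := by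
        rw [Finset.sum_sub_distrib, ← heq]
        gcongr
        linarith
    _ ≤ _ := by
        rw [Finset.mul_sum]
        apply Finset.sum_le_sum
        intro k hk
        by_cases hp : k.Prime
        · by_cases hk8 : (k:ℝ) ≤ n / 8
          · simp only [hp, hk8, and_self, if_true, sub_self, mul_zero]
            positivity
          · simp only [hp, hk8, and_false, if_true, if_false, sub_zero]
            have hk1 : (k:ℝ) ≤ n := by
              have := Finset.mem_range.1 hk
              exact_mod_cast (by omega : k ≤ n)
            have hk0 : (0:ℝ) < k := by exact_mod_cast hp.pos
            exact mul_le_mul (pow_le_pow_left₀ (by positivity) (not_le.1 hk8).le m)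
              (Real.log_le_log hk0 hk1) (Real.log_nonneg (by exact_mod_cast hp.one_le))
              (by positivity)
        · simp [hp]

lemma nat_version (d : ℕ) [NeZero d] (m : ℕ) :
    Tendsto (fun n : ℕ =>
      (∑ k ∈ Finset.range (n + 1), (if k.Prime ∧ d ∣ (k - 1) then (k:ℝ) ^ m else 0)) /
      (∑ k ∈ Finset.range (n + 1), (if k.Prime then (k:ℝ) ^ m else 0))) atTop
      (𝓝 (1 / (d.totient : ℝ))) := by
  set A : ℝ := 1 / (d.totient : ℝ) with hA
  set e : ℕ → ℝ := fun k => (if k.Prime ∧ d ∣ (k - 1) then 1 else 0) - A * (if k.Prime then 1 else 0) with he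
  have hex : ∀ (x : ℕ → ℝ) (n : ℕ), ∑ k ∈ Finset.range (n + 1), e k * x k =
      (∑ k ∈ Finset.range (n + 1), (if k.Prime ∧ d ∣ (k - 1) then x k else 0)) -
      A * (∑ k ∈ Finset.range (n + 1), (if k.Prime then x k else 0)) := by
    intro x n
    rw [Finset.mul_sum, ← Finset.sum_sub_distrib]
    apply Finset.sum_congr rfl
    intro k _
    simp only [he]
    split_ifs <;> ring
  have hT : Tendsto (fun n : ℕ => (∑ k ∈ Finset.range (n + 1), e k * Real.log k) / n) atTop (𝓝 0) := by
    have := (thetaAP d).sub (theta_one_lim.const_mul A)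
    rw [← hA, mul_one, sub_self] at this
    refine this.congr fun n => ?_
    rw [hex (fun k => Real.log k) n, sub_div, mul_div_assoc]
  have hU := abel_log e (by simp [he, Nat.not_prime_zero]) (by simp [he, Nat.not_prime_one]) hT
  rw [tendsto_iff_norm_sub_tendsto_zero]
  have hgoal : ∀ η : ℝ, 0 < η → ∀ᶠ n : ℕ in atTop,
      ‖(∑ k ∈ Finset.range (n + 1), (if k.Prime ∧ d ∣ (k - 1) then (k:ℝ) ^ m else 0)) /
      (∑ k ∈ Finset.range (n + 1), (if k.Prime then (k:ℝ) ^ m else 0)) - A‖ < η := by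
    intro η hη
    set c : ℝ := 8 * 8 ^ m with hc
    have hc0 : 0 < c := by positivity
    obtain ⟨K, hK0, hK⟩ := abel_pow e m hU (η / (2 * c)) (by positivity)
    have l1 : Tendsto (fun n : ℕ => c * K * (2 * Real.sqrt n * Real.log n / n)) atTop (𝓝 0) := by
      simpa using sqrt_log_small.const_mul (c * K)
    filter_upwards [denom_lower m, eventually_ge_atTop 3,
      l1.eventually (gt_mem_nhds (show 0 < η / 2 by positivity))] with n hD hn3 hl
    have hn0 : (0:ℝ) < n := by positivity
    have hlog : 0 < Real.log n := Real.log_pos (by exact_mod_cast (by omega : 1 < n))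
    set D := ∑ k ∈ Finset.range (n + 1), (if k.Prime then (k:ℝ) ^ m else 0) with hDdef
    have hDpos : 0 < D := lt_of_lt_of_le (by positivity) hD
    have hV := hK n hn3
    rw [hex (fun k => (k:ℝ) ^ m) n, ← hDdef] at hV
    have : (∑ k ∈ Finset.range (n + 1), (if k.Prime ∧ d ∣ (k - 1) then (k:ℝ) ^ m else 0)) / D - A =
        ((∑ k ∈ Finset.range (n + 1), (if k.Prime ∧ d ∣ (k - 1) then (k:ℝ) ^ m else 0)) - A * D) / D := by
      field_simp
    rw [this, norm_div, Real.norm_eq_abs, Real.norm_of_nonneg hDpos.le, div_lt_iff₀ hDpos]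
    refine hV.trans_lt (lt_of_lt_of_le ?_ (mul_le_mul_of_nonneg_left hD hη.le))
    have e1 : 2 * (K + η / (2 * c) * (n / Real.log n)) * (n:ℝ) ^ m =
        (c * K * Real.log n / n + η / 2) * (((n:ℝ) / 8) ^ m * (n / 4) / Real.log n) := by
      rw [div_pow, hc]
      field_simp
      ring
    rw [e1]
    apply mul_lt_mul_of_pos_right _ (by positivity)
    have hs1 : 1 ≤ Real.sqrt n := by
      rw [Real.one_le_sqrt]; exact_mod_cast (by omega : 1 ≤ n)
    have : c * K * Real.log n / n ≤ c * K * (2 * Real.sqrt n * Real.log n / n) := by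
      rw [mul_div_assoc]
      gcongr
      nlinarith
    linarith
  rw [Metric.tendsto_atTop']
  intro η hη
  obtain ⟨N, hN⟩ := eventually_atTop.1 (hgoal η hη)
  exact ⟨N, fun n hn => by rw [Real.dist_eq, sub_zero, abs_norm]; exact hN n hn.le⟩

end Helpers

/-- For fixed `d ≥ 1` and `m ≥ 0`, the ratio
`(∑_{p ≤ x, p ≡ 1 (mod d)} p^m) / (∑_{p ≤ x} p^m)` tends to `1/φ(d)` as `x → ∞`. -/
theorem prime_power_sum_in_progression (d : ℕ) (hd : 0 < d) (m : ℕ) :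
    Tendsto (fun x : ℝ =>
        (∑ p ∈ (Finset.range (⌊x⌋₊ + 1)).filter (fun p => Nat.Prime p ∧ d ∣ (p - 1)),
            (p : ℝ) ^ m) /
          (∑ p ∈ (Finset.range (⌊x⌋₊ + 1)).filter Nat.Prime, (p : ℝ) ^ m))
      atTop (nhds (1 / (d.totient : ℝ))) := by
  haveI : NeZero d := ⟨hd.ne'⟩
  simp_rw [Finset.sum_filter]
  exact (nat_version d m).comp tendsto_nat_floor_atTop
end

section
/- Let p_1 < p_2 < ... denote the sequence of all primes and let k ≥ 0 be an integer. Then the limit as N → ∞ of ( ∑_{i=1}^N φ(φ(p_i^{k+1})) ) / ( ∑_{i=1}^N φ(p_i^{k+1}) ) exists and equals Artin's constant A = ∏_p (1 − 1/(p(p−1))). -/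
open Filter

/-- Artin's constant `A = ∏_p (1 - 1/(p(p-1)))`, product over all primes. -/
noncomputable def artinConstant : ℝ :=
  ∏' p : Nat.Primes, (1 - 1 / (((p : ℕ) : ℝ) * (((p : ℕ) : ℝ) - 1)))

section
open Filter MeasureTheory Set Topology


noncomputable def fejK (L u : ℝ) : ℝ := 2 * (1 - Real.cos (L * u)) / (L * u ^ 2)

lemma fejK_half (L u : ℝ) (hL : 0 < L) (hu : u ≠ 0) :
    ∫ t in (0:ℝ)..L, ((1 - t / L : ℝ) : ℂ) * Complex.exp (Complex.I * t * u) =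
      (Complex.exp (Complex.I * L * u) - 1) / (L * (Complex.I * u) ^ 2) - 1 / (Complex.I * u) := by
  have hu' : (u : ℂ) ≠ 0 := by exact_mod_cast hu
  have hL' : (L : ℂ) ≠ 0 := by exact_mod_cast hL.ne'
  have hI := Complex.I_ne_zero
  have hd : ∀ t ∈ uIcc (0:ℝ) L, HasDerivAt (fun t : ℝ => ((1 - (t:ℂ) / L)) * Complex.exp (Complex.I * t * u) / (Complex.I * u) + Complex.exp (Complex.I * t * u) / (L * (Complex.I * u) ^ 2))
      (((1 - t / L : ℝ) : ℂ) * Complex.exp (Complex.I * t * u)) t := by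
    intro t _
    have h0 : HasDerivAt (fun t : ℝ => (t : ℂ)) 1 t := Complex.ofRealCLM.hasDerivAt
    have h1 : HasDerivAt (fun t : ℝ => Complex.exp (Complex.I * t * u)) (Complex.exp (Complex.I * t * u) * (Complex.I * 1 * u)) t :=
      ((h0.const_mul Complex.I).mul_const (u:ℂ)).cexp
    have h2 : HasDerivAt (fun t : ℝ => (1 - (t:ℂ) / L)) (- (1 / (L:ℂ))) t := (h0.div_const (L:ℂ)).const_sub 1
    convert! ((h2.mul h1).div_const (Complex.I * u)).add (h1.div_const (L * (Complex.I * u) ^ 2)) using 1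
    push_cast
    field_simp
    ring
  rw [intervalIntegral.integral_eq_sub_of_hasDerivAt hd]
  · simp only [Complex.ofReal_zero, mul_zero, zero_mul, Complex.exp_zero, zero_div, sub_zero]
    field_simp
    ring
  · apply Continuous.intervalIntegrable
    fun_prop

lemma fejK_int (L u : ℝ) (hL : 0 < L) (hu : u ≠ 0) :
    ∫ t in (-L)..L, ((1 - |t| / L : ℝ) : ℂ) * Complex.exp (Complex.I * t * u) = (fejK L u : ℂ) := by
  have hu' : (u : ℂ) ≠ 0 := by exact_mod_cast hu
  have hL' : (L : ℂ) ≠ 0 := by exact_mod_cast hL.ne'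
  have hI := Complex.I_ne_zero
  have hc : Continuous fun t : ℝ => ((1 - |t| / L : ℝ) : ℂ) * Complex.exp (Complex.I * t * u) := by fun_prop
  rw [← intervalIntegral.integral_add_adjacent_intervals (b := 0) (hc.intervalIntegrable _ _) (hc.intervalIntegrable _ _)]
  have e1 : ∫ t in (0:ℝ)..L, ((1 - |t| / L : ℝ) : ℂ) * Complex.exp (Complex.I * t * u) =
      ∫ t in (0:ℝ)..L, ((1 - t / L : ℝ) : ℂ) * Complex.exp (Complex.I * t * u) := by
    apply intervalIntegral.integral_congr
    intro t ht
    rw [uIcc_of_le hL.le] at ht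
    simp only [abs_of_nonneg ht.1]
  have e2 : ∫ t in (-L:ℝ)..0, ((1 - |t| / L : ℝ) : ℂ) * Complex.exp (Complex.I * t * u) =
      ∫ t in (0:ℝ)..L, ((1 - t / L : ℝ) : ℂ) * Complex.exp (Complex.I * t * (-u : ℝ)) := by
    have := intervalIntegral.integral_comp_neg (a := 0) (b := L) (fun t : ℝ => ((1 - |t| / L : ℝ) : ℂ) * Complex.exp (Complex.I * t * u))
    rw [neg_zero] at this
    rw [← this]
    apply intervalIntegral.integral_congr
    intro t ht
    rw [uIcc_of_le hL.le] at ht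
    simp only [abs_neg, abs_of_nonneg ht.1]
    push_cast
    ring_nf
  rw [e1, e2, fejK_half L u hL hu, fejK_half L (-u) hL (neg_ne_zero.mpr hu), fejK]
  push_cast
  rw [Complex.cos]
  have : Complex.exp (Complex.I * L * u) = Complex.exp (L * u * Complex.I) := by ring_nf
  have h2 : Complex.exp (Complex.I * L * -u) = Complex.exp (-(L * u) * Complex.I) := by ring_nf
  rw [this, h2]
  have hI2 : Complex.I ^ 2 = -1 := Complex.I_sq
  field_simp
  rw [hI2]
  ring

lemma fejK_nonneg (L u : ℝ) (hL : 0 < L) : 0 ≤ fejK L u := by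
  unfold fejK
  have := Real.cos_le_one (L * u)
  apply div_nonneg <;> [linarith; positivity]

lemma fejK_le_tail (L u : ℝ) (hL : 0 < L) : fejK L u ≤ 4 / (L * u ^ 2) := by
  unfold fejK
  have := Real.neg_one_le_cos (L * u)
  gcongr
  linarith

lemma fejK_le (L u : ℝ) (hL : 0 < L) : fejK L u ≤ (L + 4 / L) * (1 + u ^ 2)⁻¹ := by
  rcases eq_or_ne u 0 with rfl | hu
  · simp [fejK]; positivity
  · have h1 : fejK L u ≤ L := by
      unfold fejK
      rw [div_le_iff₀ (by positivity)]
      have := Real.one_sub_sq_div_two_le_cos (x := L * u)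
      nlinarith
    have h2 : fejK L u * u ^ 2 ≤ 4 / L := by
      have := fejK_le_tail L u hL
      calc _ ≤ 4 / (L * u ^ 2) * u ^ 2 := by gcongr
        _ = _ := by field_simp
    rw [← div_eq_mul_inv, le_div_iff₀ (by positivity)]
    linarith

lemma fejK_ge (L u : ℝ) (hL : 0 < L) (hu : u ≠ 0) (h : |u| ≤ 1 / L) : 4 / Real.pi ^ 2 * L ≤ fejK L u := by
  unfold fejK
  have hb : |L * u| ≤ Real.pi := by
    rw [abs_mul, abs_of_pos hL]
    calc L * |u| ≤ L * (1 / L) := by gcongr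
      _ = 1 := by field_simp
      _ ≤ _ := by linarith [Real.pi_gt_three]
  have := Real.cos_le_one_sub_mul_cos_sq hb
  rw [le_div_iff₀ (by positivity)]
  calc 4 / Real.pi ^ 2 * L * (L * u ^ 2) = 2 * (2 / Real.pi ^ 2 * (L * u) ^ 2) := by ring
    _ ≤ _ := by linarith

lemma fejK_meas (L : ℝ) : Measurable (fejK L) := by
  unfold fejK
  fun_prop

lemma fejK_integrable (L : ℝ) (hL : 0 < L) : Integrable (fejK L) := by
  refine (integrable_inv_one_add_sq.const_mul (L + 4 / L)).mono' (fejK_meas L).aestronglyMeasurable ?_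
  refine Eventually.of_forall fun u => ?_
  rw [Real.norm_of_nonneg (fejK_nonneg L u hL)]
  exact fejK_le L u hL


lemma smooth_delta (D : ℝ → ℝ) (hDm : Measurable D) (C : ℝ) (hD : ∀ v > 0, |D v| ≤ C) (H : ℂ → ℂ)
    (hLap : ∀ δ : ℝ, 0 < δ → ∀ t : ℝ, ∫ v in Ioi (0:ℝ), (D v : ℂ) * Complex.exp (-((δ + t * Complex.I) * v)) = H (δ + t * Complex.I))
    (L w δ : ℝ) (hL : 0 < L) (hδ : 0 < δ) :
    ∫ t in Ioc (-L) L, ((1 - |t| / L : ℝ) : ℂ) * Complex.exp (Complex.I * t * w) * H (δ + t * Complex.I) =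
      ((∫ v in Ioi (0:ℝ), D v * Real.exp (-δ * v) * fejK L (w - v) : ℝ) : ℂ) := by
  have hC : 0 ≤ C := (abs_nonneg _).trans (hD 1 one_pos)
  simp_rw [← hLap δ hδ, ← integral_const_mul]
  rw [integral_integral_swap]
  · rw [← integral_complex_ofReal]
    apply integral_congr_ae
    have hne : ∀ᵐ v ∂(volume.restrict (Ioi (0:ℝ))), v ≠ w := by
      apply ae_restrict_of_ae
      simp [ae_iff, measure_singleton]
    filter_upwards [hne] with v hv
    have h1 := fejK_int L (w - v) hL (sub_ne_zero.mpr hv.symm)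
    rw [intervalIntegral.integral_of_le (by linarith)] at h1
    push_cast
    rw [← h1, ← integral_const_mul]
    apply integral_congr_ae
    refine Eventually.of_forall fun t => ?_
    have : Complex.exp (Complex.I * t * w) * Complex.exp (-((δ + t * Complex.I) * v)) =
      Complex.exp (-δ * v) * Complex.exp (Complex.I * t * (w - v : ℝ)) := by
      rw [← Complex.exp_add, ← Complex.exp_add]; congr 1; push_cast; ring
    push_cast at this ⊢
    linear_combination ((1 - |t| / L : ℂ)) * D v * this
  · have hI : Integrable (fun p : ℝ × ℝ => (1:ℝ) * (C * Real.exp (-δ * p.2))) ((volume.restrict (Ioc (-L) L)).prod (volume.restrict (Ioi 0))) := by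
      apply Integrable.mul_prod (f := fun _ : ℝ => (1:ℝ)) (g := fun v => C * Real.exp (-δ * v))
      · exact integrable_const _
      · exact (integrableOn_exp_mul_Ioi (by linarith) 0).const_mul C
    refine hI.mono' ?_ ?_
    · apply Measurable.aestronglyMeasurable
      simp only [Function.uncurry_def]
      fun_prop
    · rw [Measure.prod_restrict]
      filter_upwards [ae_restrict_mem (measurableSet_Ioc.prod measurableSet_Ioi)] with p hp
      obtain ⟨h1, h2⟩ := hp
      simp only [Function.uncurry_def]
      have e1 : ‖((1 - |p.1| / L : ℝ) : ℂ)‖ ≤ 1 := by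
        rw [Complex.norm_real, Real.norm_eq_abs, abs_le]
        have : |p.1| ≤ L := abs_le.mpr ⟨h1.1.le, h1.2⟩
        have h3 : |p.1| / L ≤ 1 := (div_le_one hL).mpr this
        have : 0 ≤ |p.1| / L := by positivity
        constructor <;> linarith
      have e2 : ‖Complex.exp (Complex.I * p.1 * w)‖ = 1 := by
        rw [Complex.norm_exp]; simp
      have e3 : ‖Complex.exp (-((δ + p.1 * Complex.I) * p.2))‖ = Real.exp (-δ * p.2) := by
        rw [Complex.norm_exp]; simp
      have e4 : ‖(D p.2 : ℂ)‖ ≤ C := by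
        rw [Complex.norm_real, Real.norm_eq_abs]; exact hD _ h2
      rw [norm_mul, norm_mul, norm_mul, e2, e3, mul_one]
      gcongr

lemma smooth_zero (D : ℝ → ℝ) (hDm : Measurable D) (C : ℝ) (hD : ∀ v > 0, |D v| ≤ C) (H : ℂ → ℂ)
    (hH : ContinuousOn H {z | 0 ≤ z.re})
    (hLap : ∀ δ : ℝ, 0 < δ → ∀ t : ℝ, ∫ v in Ioi (0:ℝ), (D v : ℂ) * Complex.exp (-((δ + t * Complex.I) * v)) = H (δ + t * Complex.I))
    (L w : ℝ) (hL : 0 < L) :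
    ∫ t in Ioc (-L) L, ((1 - |t| / L : ℝ) : ℂ) * Complex.exp (Complex.I * t * w) * H (t * Complex.I) =
      ((∫ v in Ioi (0:ℝ), D v * fejK L (w - v) : ℝ) : ℂ) := by
  have hC : 0 ≤ C := (abs_nonneg _).trans (hD 1 one_pos)
  have hHc : ∀ δ : ℝ, 0 ≤ δ → Continuous fun t : ℝ => H (δ + t * Complex.I) := by
    intro δ hδ
    apply hH.comp_continuous (by fun_prop)
    intro t
    simpa using hδ
  obtain ⟨M, hM⟩ : ∃ M, ∀ δ ∈ Icc (0:ℝ) 1, ∀ t ∈ Icc (-L) L, ‖H (δ + t * Complex.I)‖ ≤ M := by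
    have hc : ContinuousOn (fun p : ℝ × ℝ => H (p.1 + p.2 * Complex.I)) (Icc 0 1 ×ˢ Icc (-L) L) := by
      apply hH.comp (by fun_prop)
      intro p hp
      simpa using hp.1.1
    obtain ⟨M, hM⟩ := (isCompact_Icc.prod isCompact_Icc).exists_bound_of_continuousOn hc
    exact ⟨M, fun δ hδ t ht => hM (δ, t) ⟨hδ, ht⟩⟩
  have hw : ∀ t ∈ Ioc (-L) L, ‖((1 - |t| / L : ℝ) : ℂ) * Complex.exp (Complex.I * t * w)‖ ≤ 1 := by
    intro t h1
    have e1 : ‖((1 - |t| / L : ℝ) : ℂ)‖ ≤ 1 := by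
      rw [Complex.norm_real, Real.norm_eq_abs, abs_le]
      have : |t| ≤ L := abs_le.mpr ⟨h1.1.le, h1.2⟩
      have h3 : |t| / L ≤ 1 := (div_le_one hL).mpr this
      have : 0 ≤ |t| / L := by positivity
      constructor <;> linarith
    have e2 : ‖Complex.exp (Complex.I * t * w)‖ = 1 := by
      rw [Complex.norm_exp]; simp
    rw [norm_mul, e2, mul_one]
    exact e1
  have hev : ∀ᶠ δ : ℝ in 𝓝[>] 0, δ ∈ Ioc (0:ℝ) 1 := Ioc_mem_nhdsGT one_pos
  have lim1 : Tendsto (fun δ : ℝ => ∫ t in Ioc (-L) L, ((1 - |t| / L : ℝ) : ℂ) * Complex.exp (Complex.I * t * w) * H (δ + t * Complex.I)) (𝓝[>] 0)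
      (𝓝 (∫ t in Ioc (-L) L, ((1 - |t| / L : ℝ) : ℂ) * Complex.exp (Complex.I * t * w) * H (t * Complex.I))) := by
    apply tendsto_integral_filter_of_dominated_convergence (fun _ => M)
    · filter_upwards [hev] with δ hδ
      apply Continuous.aestronglyMeasurable
      refine Continuous.mul (by fun_prop) (hHc δ hδ.1.le)
    · filter_upwards [hev] with δ hδ
      filter_upwards [ae_restrict_mem measurableSet_Ioc] with t ht
      rw [norm_mul]
      calc _ ≤ 1 * M := mul_le_mul (hw t ht) (hM δ ⟨hδ.1.le, hδ.2⟩ t ⟨ht.1.le, ht.2⟩) (norm_nonneg _) zero_le_one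
        _ = M := one_mul M
    · exact integrable_const _
    · refine Eventually.of_forall fun t => ?_
      apply Tendsto.const_mul
      have h0 : ContinuousWithinAt H {z | 0 ≤ z.re} (t * Complex.I) := hH _ (by simp)
      have h1 : Tendsto (fun δ : ℝ => (δ + t * Complex.I : ℂ)) (𝓝[>] 0) (𝓝[{z | 0 ≤ z.re}] (t * Complex.I)) := by
        rw [tendsto_nhdsWithin_iff]
        constructor
        · have : Continuous fun δ : ℝ => (δ + t * Complex.I : ℂ) := by fun_prop
          have := (this.tendsto 0).mono_left (nhdsWithin_le_nhds (s := Ioi 0))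
          simpa using this
        · filter_upwards [hev] with δ hδ
          simpa using hδ.1.le
      exact h0.tendsto.comp h1
  have hKi : Integrable fun v => fejK L (w - v) := (fejK_integrable L hL).comp_sub_left w
  have hKm := fejK_meas L
  have lim2 : Tendsto (fun δ : ℝ => ∫ v in Ioi (0:ℝ), D v * Real.exp (-δ * v) * fejK L (w - v)) (𝓝[>] 0)
      (𝓝 (∫ v in Ioi (0:ℝ), D v * fejK L (w - v))) := by
    apply tendsto_integral_filter_of_dominated_convergence (fun v => C * fejK L (w - v))
    · refine Eventually.of_forall fun δ => ?_
      apply Measurable.aestronglyMeasurable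
      fun_prop
    · filter_upwards [hev] with δ hδ
      filter_upwards [ae_restrict_mem measurableSet_Ioi] with v hv
      rw [norm_mul, norm_mul, Real.norm_of_nonneg (fejK_nonneg L _ hL), Real.norm_of_nonneg (Real.exp_pos _).le, Real.norm_eq_abs]
      have : Real.exp (-δ * v) ≤ 1 := by
        rw [Real.exp_le_one_iff]
        have := mul_pos hδ.1 hv
        linarith
      have h3 := fejK_nonneg L (w - v) hL
      calc _ ≤ C * 1 * fejK L (w - v) := by
            gcongr
            exact hD v hv
        _ = _ := by ring
    · exact (hKi.const_mul C).integrableOn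
    · refine Eventually.of_forall fun v => ?_
      have : Continuous fun δ : ℝ => D v * Real.exp (-δ * v) * fejK L (w - v) := by fun_prop
      have := (this.tendsto 0).mono_left (nhdsWithin_le_nhds (s := Ioi 0))
      simpa using this
  have lim2' := (Complex.continuous_ofReal.tendsto _).comp lim2
  refine tendsto_nhds_unique lim1 (lim2'.congr' ?_)
  filter_upwards [hev] with δ hδ
  exact (smooth_delta D hDm C hD H hLap L w δ hL hδ.1).symm

lemma smooth_lim (D : ℝ → ℝ) (hDm : Measurable D) (C : ℝ) (hD : ∀ v > 0, |D v| ≤ C) (H : ℂ → ℂ)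
    (hH : ContinuousOn H {z | 0 ≤ z.re})
    (hLap : ∀ δ : ℝ, 0 < δ → ∀ t : ℝ, ∫ v in Ioi (0:ℝ), (D v : ℂ) * Complex.exp (-((δ + t * Complex.I) * v)) = H (δ + t * Complex.I))
    (L : ℝ) (hL : 0 < L) :
    Tendsto (fun w => ∫ v in Ioi (0:ℝ), D v * fejK L (w - v)) atTop (𝓝 0) := by
  let f : ℝ → ℂ := (Ioc (-L) L).indicator fun t => ((1 - |t| / L : ℝ) : ℂ) * H (t * Complex.I)
  have h1 := Real.tendsto_integral_exp_smul_cocompact f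
  have h2 : Tendsto (fun w : ℝ => -(w / (2 * Real.pi))) atTop (cocompact ℝ) := by
    have : Tendsto (fun w : ℝ => -(w / (2 * Real.pi))) atTop atBot :=
      tendsto_neg_atTop_atBot.comp (tendsto_id.atTop_div_const (by positivity))
    exact this.mono_right atBot_le_cocompact
  have h3 := (Complex.continuous_re.tendsto _).comp (h1.comp h2)
  simp only [Complex.zero_re] at h3
  refine h3.congr fun w => ?_
  simp only [Function.comp]
  rw [← Complex.ofReal_re (∫ v in Ioi (0:ℝ), D v * fejK L (w - v)), ← smooth_zero D hDm C hD H hH hLap L w hL]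
  congr 1
  rw [← integral_indicator measurableSet_Ioc]
  apply integral_congr_ae
  refine Eventually.of_forall fun t => ?_
  simp only [f]
  by_cases ht : t ∈ Ioc (-L) L
  · simp only [indicator_of_mem ht]
    rw [Circle.smul_def, Real.fourierChar_apply, smul_eq_mul]
    have : Complex.exp (((2 * Real.pi * -(t * -(w / (2 * Real.pi))) : ℝ) : ℂ) * Complex.I) = Complex.exp (Complex.I * t * w) := by
      congr 1
      push_cast
      have : (Real.pi : ℂ) ≠ 0 := by exact_mod_cast Real.pi_ne_zero
      field_simp
    rw [this]; ring
  · simp only [indicator_of_notMem ht, smul_zero]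


lemma fejK_mass (L η : ℝ) (hL : 0 < L) (hη : 1 / L ≤ η) :
    8 / Real.pi ^ 2 ≤ ∫ u in Icc (-η) η, fejK L u := by
  have hi := fejK_integrable L hL
  have h1 : ∫ u in Icc (-(1 / L)) (1 / L), fejK L u ≤ ∫ u in Icc (-η) η, fejK L u := by
    apply setIntegral_mono_set hi.integrableOn
    · exact Eventually.of_forall fun u => fejK_nonneg L u hL
    · exact (Icc_subset_Icc (by linarith) hη).eventuallyLE
  have hne : ∀ᵐ u ∂(volume.restrict (Icc (-(1/L)) (1/L))), u ≠ (0:ℝ) := by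
    apply ae_restrict_of_ae
    simp [ae_iff, measure_singleton]
  have h2 : ∫ u in Icc (-(1 / L)) (1 / L), (4 / Real.pi ^ 2 * L) ≤ ∫ u in Icc (-(1 / L)) (1 / L), fejK L u := by
    apply integral_mono_ae (integrable_const _) hi.integrableOn
    filter_upwards [hne, ae_restrict_mem measurableSet_Icc] with u hu hu2
    exact fejK_ge L u hL hu (abs_le.mpr hu2)
  have h3 : ∫ u in Icc (-(1 / L)) (1 / L), (4 / Real.pi ^ 2 * L) = 8 / Real.pi ^ 2 := by
    have : 0 < 1 / L := by positivity
    rw [setIntegral_const, Real.volume_real_Icc_of_le (by linarith), smul_eq_mul]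
    field_simp
    ring
  linarith

lemma fej_window (D : ℝ → ℝ) (hDm : Measurable D) (C : ℝ) (hD : ∀ v > 0, |D v| ≤ C)
    (L η w c : ℝ) (hL : 0 < L) (hη : 0 < η) (hw : η < w) (h : ∀ v ∈ Icc (w - η) (w + η), c ≤ D v) :
    c * (∫ u in Icc (-η) η, fejK L u) - C * (4 / L * (1 + 1 / η ^ 2)) * Real.pi ≤
      ∫ v in Ioi (0:ℝ), D v * fejK L (w - v) := by
  have hC : 0 ≤ C := (abs_nonneg _).trans (hD 1 one_pos)
  set T := C * (4 / L * (1 + 1 / η ^ 2)) with hT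
  have hT0 : 0 ≤ T := by positivity
  have hKi : Integrable fun v => fejK L (w - v) := (fejK_integrable L hL).comp_sub_left w
  have hKm := fejK_meas L
  have hsub : Icc (w - η) (w + η) ⊆ Ioi 0 := fun v hv => by
    simp only [mem_Ioi]; linarith [hv.1]
  have hQi : Integrable fun v : ℝ => T * (1 + (w - v) ^ 2)⁻¹ := (integrable_inv_one_add_sq.comp_sub_left w).const_mul T
  have hi1 : Integrable ((Icc (w - η) (w + η)).indicator fun v => c * fejK L (w - v)) :=
    (hKi.const_mul c).indicator measurableSet_Icc
  have hpt : ∀ v ∈ Ioi (0:ℝ), (Icc (w - η) (w + η)).indicator (fun v => c * fejK L (w - v)) v - T * (1 + (w - v) ^ 2)⁻¹ ≤ D v * fejK L (w - v) := by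
    intro v hv
    have hk := fejK_nonneg L (w - v) hL
    have hq : 0 ≤ T * (1 + (w - v) ^ 2)⁻¹ := by positivity
    by_cases hvJ : v ∈ Icc (w - η) (w + η)
    · rw [indicator_of_mem hvJ]
      have := mul_le_mul_of_nonneg_right (h v hvJ) hk
      linarith
    · rw [indicator_of_notMem hvJ]
      have hsq : η ^ 2 ≤ (w - v) ^ 2 := by
        rw [sq_le_sq, abs_of_pos hη]
        by_contra hcon
        push Not at hcon
        rw [abs_lt] at hcon
        exact hvJ ⟨by linarith [hcon.2], by linarith [hcon.1]⟩
      have hpos : 0 < (w - v) ^ 2 := by have := pow_pos hη 2; linarith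
      have h1 : fejK L (w - v) ≤ 4 / L * (1 + 1 / η ^ 2) * (1 + (w - v) ^ 2)⁻¹ := by
        refine (fejK_le_tail L (w - v) hL).trans ?_
        rw [← div_eq_mul_inv, le_div_iff₀ (by positivity)]
        have : 4 / (L * (w - v) ^ 2) * (1 + (w - v) ^ 2) = 4 / L * (1 + 1 / (w - v) ^ 2) := by
          have hne : w - v ≠ 0 := fun h0 => by simp [h0] at hpos
          generalize w - v = x at hne
          field_simp
          ring
        rw [this]
        gcongr
      have h2 := (abs_le.mp (hD v hv)).1
      have h3 : C * fejK L (w - v) ≤ T * (1 + (w - v) ^ 2)⁻¹ := by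
        rw [hT, mul_assoc C]
        gcongr
      nlinarith
  have hDi : IntegrableOn (fun v => D v * fejK L (w - v)) (Ioi 0) := by
    refine (hKi.const_mul C).integrableOn.mono' (by apply Measurable.aestronglyMeasurable; fun_prop) ?_
    filter_upwards [ae_restrict_mem measurableSet_Ioi] with v hv
    rw [norm_mul, Real.norm_of_nonneg (fejK_nonneg L _ hL)]
    exact mul_le_mul_of_nonneg_right (hD v hv) (fejK_nonneg L _ hL)
  have hmono := setIntegral_mono_on (hi1.integrableOn.sub hQi.integrableOn) hDi measurableSet_Ioi hpt
  simp only [Pi.sub_apply] at hmono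
  rw [integral_sub hi1.integrableOn hQi.integrableOn] at hmono
  have e1 : ∫ v in Ioi (0:ℝ), (Icc (w - η) (w + η)).indicator (fun v => c * fejK L (w - v)) v = c * (∫ u in Icc (-η) η, fejK L u) := by
    rw [setIntegral_indicator measurableSet_Icc, inter_eq_self_of_subset_right hsub, integral_const_mul]
    congr 1
    rw [← integral_indicator measurableSet_Icc, ← integral_indicator measurableSet_Icc,
      ← integral_sub_left_eq_self (μ := volume) _ w]
    congr 1
    ext v
    simp only [indicator, mem_Icc]
    congr 1
    · simp only [eq_iff_iff]; constructor <;> rintro ⟨h1, h2⟩ <;> constructor <;> linarith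
    · rw [sub_sub_cancel]
  have e2 : ∫ v in Ioi (0:ℝ), T * (1 + (w - v) ^ 2)⁻¹ ≤ T * Real.pi := by
    calc _ ≤ ∫ v : ℝ, T * (1 + (w - v) ^ 2)⁻¹ := setIntegral_le_integral hQi (Eventually.of_forall fun v => by positivity)
      _ = T * Real.pi := by
        rw [integral_const_mul]
        congr 1
        rw [integral_sub_left_eq_self (μ := volume) (fun u : ℝ => (1 + u ^ 2)⁻¹) w]
        exact integral_univ_inv_one_add_sq
  linarith

lemma tauber_aux (D : ℝ → ℝ) (hDm : Measurable D) (C : ℝ) (hD : ∀ v > 0, |D v| ≤ C)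
    (hlim : ∀ L > 0, Tendsto (fun w => ∫ v in Ioi (0:ℝ), D v * fejK L (w - v)) atTop (𝓝 0))
    (ε η : ℝ) (hε : 0 < ε) (hη : 0 < η) :
    ∀ᶠ w in atTop, ∀ c, (∀ v ∈ Icc (w - η) (w + η), c ≤ D v) → c ≤ ε := by
  have hm0 : 0 < 8 / Real.pi ^ 2 := by positivity
  obtain ⟨L, hL, hLη, hLt⟩ : ∃ L > 0, 1 / L ≤ η ∧ C * (4 / L * (1 + 1 / η ^ 2)) * Real.pi ≤ ε * (8 / Real.pi ^ 2) / 2 := by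
    have t1 : Tendsto (fun L : ℝ => 1 / L) atTop (𝓝 0) := by
      simpa using tendsto_inv_atTop_zero (𝕜 := ℝ)
    have t2 : Tendsto (fun L : ℝ => C * (4 / L * (1 + 1 / η ^ 2)) * Real.pi) atTop (𝓝 0) := by
      have := t1.const_mul (C * 4 * (1 + 1 / η ^ 2) * Real.pi)
      rw [mul_zero] at this
      refine this.congr fun L => ?_
      ring
    have := ((eventually_gt_atTop 0).and ((t1.eventually_le_const hη).and (t2.eventually_le_const (show 0 < ε * (8 / Real.pi ^ 2) / 2 by positivity)))).exists
    obtain ⟨L, h1, h2, h3⟩ := this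
    exact ⟨L, h1, h2, h3⟩
  filter_upwards [eventually_gt_atTop η, (hlim L hL).eventually_le_const (show 0 < ε * (8 / Real.pi ^ 2) / 2 by positivity)] with w hw hI c hc
  have := fej_window D hDm C hD L η w c hL hη hw hc
  have hm := fejK_mass L η hL hLη
  by_contra hcon
  push Not at hcon
  have h1 : ε * (8 / Real.pi ^ 2) < c * (∫ u in Icc (-η) η, fejK L u) := by
    calc _ < c * (8 / Real.pi ^ 2) := by gcongr
      _ ≤ _ := by gcongr; linarith
  linarith

theorem tauber (D : ℝ → ℝ) (hDm : Measurable D) (C : ℝ) (hD : ∀ v > 0, |D v| ≤ C) (M : ℝ)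
    (hsd : ∀ v v', 0 < v → v ≤ v' → D v - M * (v' - v) ≤ D v') (H : ℂ → ℂ)
    (hH : ContinuousOn H {z | 0 ≤ z.re})
    (hLap : ∀ δ : ℝ, 0 < δ → ∀ t : ℝ, ∫ v in Ioi (0:ℝ), (D v : ℂ) * Complex.exp (-((δ + t * Complex.I) * v)) = H (δ + t * Complex.I)) :
    Tendsto D atTop (𝓝 0) := by
  have hlim := fun L hL => smooth_lim D hDm C hD H hH hLap L hL
  have hlim' : ∀ L > 0, Tendsto (fun w => ∫ v in Ioi (0:ℝ), (-D v) * fejK L (w - v)) atTop (𝓝 0) := by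
    intro L hL
    have := (hlim L hL).neg
    rw [neg_zero] at this
    refine this.congr fun w => ?_
    rw [← integral_neg]
    simp only [neg_mul]
  rw [Metric.tendsto_atTop']
  intro ε hε
  set η := ε / (8 * (|M| + 1)) with hηd
  have hη : 0 < η := by positivity
  have hMη : 2 * η * |M| ≤ ε / 4 := by
    have : η * (8 * (|M| + 1)) = ε := by rw [hηd]; field_simp
    nlinarith
  have hMM := le_abs_self M
  have A1 := tauber_aux D hDm C hD hlim (ε / 4) η (by positivity) hη
  have A2 := tauber_aux (fun v => -D v) hDm.neg C (fun v hv => by rw [abs_neg]; exact hD v hv) hlim' (ε / 4) η (by positivity) hη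
  have B1 := (tendsto_atTop_add_const_right atTop η tendsto_id).eventually A1
  have B2 := (tendsto_atTop_add_const_right atTop (-η) tendsto_id).eventually A2
  obtain ⟨N, hN⟩ := eventually_atTop.mp ((B1.and B2).and (eventually_gt_atTop (2 * η)))
  refine ⟨N, fun w hw => ?_⟩
  obtain ⟨⟨h1, h2⟩, h3⟩ := hN w hw.le
  simp only [id] at h1 h2
  have u1 := h1 (D w - |M| * (2 * η)) ?_
  have u2 := h2 (-D w - |M| * (2 * η)) ?_
  · rw [Real.dist_eq, sub_zero, abs_lt]
    constructor <;> linarith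
  · intro v hv
    have := hsd v w (by linarith [hv.1]) (by linarith [hv.2])
    have h5 : M * (w - v) ≤ |M| * (2 * η) := by
      calc M * (w - v) ≤ |M| * (w - v) := by gcongr; linarith [hv.2]
        _ ≤ _ := by gcongr; linarith [hv.1]
    linarith
  · intro v hv
    have := hsd w v (by linarith [hv.1]) (by linarith [hv.1])
    have h5 : M * (v - w) ≤ |M| * (2 * η) := by
      calc M * (v - w) ≤ |M| * (v - w) := by gcongr; linarith [hv.1]
        _ ≤ _ := by gcongr; linarith [hv.2]
    linarith


theorem pnt_ap_psi (d : ℕ) [NeZero d] :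
    Tendsto (fun n : ℕ => (∑ k ∈ Finset.Icc 1 n, ArithmeticFunction.vonMangoldt.residueClass (1 : ZMod d) k) / n)
      atTop (𝓝 ((d.totient : ℝ)⁻¹)) := by
  set a := ArithmeticFunction.vonMangoldt.residueClass (1 : ZMod d) with ha
  set A : ℝ := (d.totient : ℝ)⁻¹ with hA
  set C : ℝ := Real.log 4 + 4 with hCdef
  have hC0 : 0 ≤ C := by have := Real.log_nonneg (show (1:ℝ) ≤ 4 by norm_num); linarith
  have hA0 : 0 ≤ A := by positivity
  set S : ℕ → ℝ := fun n => ∑ k ∈ Finset.Icc 1 n, a k with hS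
  have ha0 : ∀ n, 0 ≤ a n := ArithmeticFunction.vonMangoldt.residueClass_nonneg _
  have hS0 : ∀ n, 0 ≤ S n := fun n => Finset.sum_nonneg fun _ _ => ha0 _
  have hSmono : Monotone S := by
    intro m n hmn
    exact Finset.sum_le_sum_of_subset_of_nonneg (Finset.Icc_subset_Icc le_rfl hmn) fun _ _ _ => ha0 _
  have hSle : ∀ x : ℝ, 0 ≤ x → S ⌊x⌋₊ ≤ C * x := by
    intro x hx
    refine le_trans ?_ (Chebyshev.psi_le_const_mul_self hx)
    unfold Chebyshev.psi
    rw [hS]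
    have : Finset.Icc 1 ⌊x⌋₊ = Finset.Ioc 0 ⌊x⌋₊ := rfl
    simp only [this]
    exact Finset.sum_le_sum fun n _ => ArithmeticFunction.vonMangoldt.residueClass_le _ n
  let B : ℝ → ℝ := fun v => Real.exp (-v) * S ⌊Real.exp v⌋₊
  have hBm : Measurable B := by
    have : Measurable fun v : ℝ => S ⌊Real.exp v⌋₊ :=
      (measurable_from_nat (f := S)).comp (Nat.measurable_floor.comp Real.measurable_exp)
    exact (by fun_prop : Measurable fun v : ℝ => Real.exp (-v)).mul this
  have hB0 : ∀ v, 0 ≤ B v := fun v => mul_nonneg (Real.exp_pos _).le (hS0 _)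
  have hBC : ∀ v, B v ≤ C := by
    intro v
    calc B v ≤ Real.exp (-v) * (C * Real.exp v) := by
          simp only [B]; gcongr; exact hSle _ (Real.exp_pos _).le
      _ = C * (Real.exp (-v) * Real.exp v) := by ring
      _ = C := by rw [← Real.exp_add]; simp
  have hO : (fun n ↦ ∑ k ∈ Finset.Icc 1 n, a k) =O[atTop] fun n : ℕ ↦ (n : ℝ) ^ (1:ℝ) := by
    apply Asymptotics.IsBigO.of_bound C
    refine Eventually.of_forall fun n => ?_
    have h1 := hSle n (Nat.cast_nonneg n)
    rw [Nat.floor_natCast] at h1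
    rw [Real.rpow_one, Real.norm_of_nonneg (Nat.cast_nonneg n), Real.norm_of_nonneg (hS0 n)]
    exact h1
  let H : ℂ → ℂ := fun z => (ArithmeticFunction.vonMangoldt.LFunctionResidueClassAux (1 : ZMod d) (1 + z) - A) / (1 + z)
  have key := tauber (fun v => B v - A) (hBm.sub_const A) (C + A) ?_ C ?_ H ?_ ?_
  · have h1 := (key.comp (Real.tendsto_log_atTop.comp tendsto_natCast_atTop_atTop)).add_const A
    rw [zero_add] at h1
    refine h1.congr' ?_
    filter_upwards [eventually_gt_atTop 0] with n hn
    have : (0:ℝ) < n := by exact_mod_cast hn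
    simp only [Function.comp, B, Real.exp_neg, Real.exp_log this, Nat.floor_natCast, sub_add_cancel, hS]
    rw [div_eq_inv_mul]
  · intro v _
    rw [abs_le]
    constructor <;> linarith [hB0 v, hBC v]
  · intro v v' _ hvv
    have h1 : Real.exp (-(v' - v)) * B v ≤ B v' := by
      simp only [B]
      rw [← mul_assoc, ← Real.exp_add]
      have : -(v' - v) + -v = -v' := by ring
      rw [this]
      gcongr
      exact hSmono (Nat.floor_le_floor (Real.exp_le_exp.mpr hvv))
    have h2 := Real.add_one_le_exp (-(v' - v))
    have h3 := hB0 v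
    have h4 := hBC v
    nlinarith
  · have h1 := ArithmeticFunction.vonMangoldt.continuousOn_LFunctionResidueClassAux (1 : ZMod d)
    refine ContinuousOn.div ?_ (by fun_prop) ?_
    · refine ContinuousOn.sub ?_ continuousOn_const
      apply h1.comp (by fun_prop)
      intro z hz
      simpa using hz
    · intro z hz h
      have := congrArg Complex.re h
      simp at this hz
      linarith
  · intro δ hδ t
    set z : ℂ := δ + t * Complex.I with hz
    have hzre : z.re = δ := by simp [hz]
    have hz0 : z ≠ 0 := fun h => by rw [h] at hzre; simp at hzre; linarith
    have hz1 : 1 + z ≠ 0 := fun h => by have := congrArg Complex.re h; simp [hzre] at this; linarith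
    have hs : (1:ℝ) < (1 + z).re := by simp [hzre, hδ]
    have hLS := LSeries_eq_mul_integral_of_nonneg a zero_le_one hs hO ha0
    have hexp_norm : ∀ v : ℝ, ‖Complex.exp (-(z * v))‖ = Real.exp (-δ * v) := by
      intro v; rw [Complex.norm_exp]; simp [hzre]
    have hei : IntegrableOn (fun v : ℝ => Complex.exp (-(z * v))) (Ioi 0) := by
      have := integrableOn_exp_mul_complex_Ioi (a := -z) (by simp [hzre, hδ]) 0
      simpa only [neg_mul] using this
    have hBi : IntegrableOn (fun v : ℝ => (B v : ℂ) * Complex.exp (-(z * v))) (Ioi 0) := by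
      refine Integrable.bdd_mul (c := C) hei ?_ ?_
      · exact (Complex.measurable_ofReal.comp hBm).aestronglyMeasurable
      · refine Eventually.of_forall fun v => ?_
        rw [Complex.norm_real, Real.norm_of_nonneg (hB0 v)]; exact hBC v
    have hAint : ∫ v in Ioi (0:ℝ), (A : ℂ) * Complex.exp (-(z * v)) = A / z := by
      rw [integral_const_mul]
      have := integral_exp_mul_complex_Ioi (a := -z) (by simp [hzre, hδ]) 0
      simp only [neg_mul] at this
      rw [this]
      simp
      ring
    have hBint : ∫ v in Ioi (0:ℝ), (B v : ℂ) * Complex.exp (-(z * v)) = LSeries (fun n => (a n : ℂ)) (1 + z) / (1 + z) := by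
      rw [hLS, mul_div_cancel_left₀ _ hz1]
      have himg : Real.exp '' Ioi 0 = Ioi 1 := by
        ext x
        constructor
        · rintro ⟨y, hy, rfl⟩
          exact Real.one_lt_exp_iff.mpr hy
        · intro hx
          exact ⟨Real.log x, Real.log_pos hx, Real.exp_log (by have : (1:ℝ) < x := hx; linarith)⟩
      rw [← himg, integral_image_eq_integral_abs_deriv_smul measurableSet_Ioi
        (fun x _ => (Real.hasDerivAt_exp x).hasDerivWithinAt) Real.exp_injective.injOn]
      apply integral_congr_ae
      refine Eventually.of_forall fun v => ?_
      simp only [B, hS]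
      rw [abs_of_pos (Real.exp_pos v), Complex.real_smul]
      push_cast
      rw [← Complex.ofReal_exp, Complex.cpow_def_of_ne_zero (by exact_mod_cast (Real.exp_pos v).ne'),
        ← Complex.ofReal_log (Real.exp_pos v).le, Real.log_exp]
      have e : Complex.exp (-(v:ℂ)) * Complex.exp (-(z * v)) = Complex.exp v * Complex.exp (v * -(1 + z + 1)) := by
        rw [← Complex.exp_add, ← Complex.exp_add]; congr 1; ring
      push_cast
      linear_combination (∑ k ∈ Finset.Icc 1 ⌊Real.exp v⌋₊, (a k : ℂ)) * e
    have e1 : ∀ v : ℝ, ((B v - A : ℝ) : ℂ) * Complex.exp (-(z * v)) = (B v : ℂ) * Complex.exp (-(z * v)) - (A : ℂ) * Complex.exp (-(z * v)) := by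
      intro v; push_cast; ring
    simp only [e1]
    rw [integral_sub hBi (hei.const_mul _), hAint, hBint]
    have haux := ArithmeticFunction.vonMangoldt.eqOn_LFunctionResidueClassAux (a := (1 : ZMod d)) isUnit_one (show 1 + z ∈ {s : ℂ | 1 < s.re} from hs)
    simp only [H]
    rw [haux]
    have : (A : ℂ) = (d.totient : ℂ)⁻¹ := by rw [hA]; push_cast; rfl
    simp only [← this]
    rw [← ha, add_sub_cancel_left]
    field_simp
    ring


noncomputable def lpw (p : ℕ) : ℝ := if p.Prime then Real.log p else 0

lemma lp_nonneg (p : ℕ) : 0 ≤ lpw p := by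
  unfold lpw; split_ifs <;> [exact Real.log_natCast_nonneg p; exact le_rfl]

lemma lp_le_log (p : ℕ) : lpw p ≤ Real.log p := by
  unfold lpw; split_ifs <;> [exact le_rfl; exact Real.log_natCast_nonneg p]

lemma sum_lp_eq_theta (n : ℕ) : ∑ p ∈ Finset.range (n + 1), lpw p = Chebyshev.theta n := by
  unfold Chebyshev.theta lpw
  rw [Nat.floor_natCast, Finset.sum_filter, Finset.range_eq_Ico, Finset.sum_eq_sum_Ico_succ_bot (by omega)]
  simp only [Nat.not_prime_zero, if_false, zero_add]
  rfl

theorem pnt_ap_theta (d : ℕ) [NeZero d] :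
    Tendsto (fun n : ℕ => (∑ p ∈ Finset.range (n + 1), lpw p * (if d ∣ p - 1 then 1 else 0)) / n)
      atTop (𝓝 ((d.totient : ℝ)⁻¹)) := by
  have h0 := pnt_ap_psi d
  set a := ArithmeticFunction.vonMangoldt.residueClass (1 : ZMod d) with ha
  have hlim : Tendsto (fun n : ℕ => 2 * √(n:ℝ) * Real.log n / n) atTop (𝓝 0) := by
    have h1 := ((isLittleO_log_rpow_atTop (show (0:ℝ) < 1/2 by norm_num)).tendsto_div_nhds_zero.comp tendsto_natCast_atTop_atTop).const_mul 2
    rw [mul_zero] at h1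
    refine h1.congr' ?_
    filter_upwards [eventually_gt_atTop 0] with n hn
    have : (0:ℝ) < n := by exact_mod_cast hn
    simp only [Function.comp]
    rw [← Real.sqrt_eq_rpow]
    have h2 := Real.sq_sqrt this.le
    have h3 : 0 < √(n:ℝ) := Real.sqrt_pos.mpr this
    rw [mul_div_assoc', div_eq_div_iff h3.ne' this.ne']
    linear_combination -2 * Real.log n * h2
  have hterm : ∀ k, 1 ≤ k → 0 ≤ a k - lpw k * (if d ∣ k - 1 then 1 else 0) ∧
      a k - lpw k * (if d ∣ k - 1 then 1 else 0) ≤ ArithmeticFunction.vonMangoldt k - lpw k := by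
    intro k hk
    have hiff : (k : ZMod d) = 1 ↔ d ∣ k - 1 := by
      rw [← Nat.cast_one, eq_comm, ZMod.natCast_eq_natCast_iff, Nat.modEq_iff_dvd' hk]
    have hl : lpw k ≤ ArithmeticFunction.vonMangoldt k := by
      unfold lpw; split_ifs with h
      · rw [ArithmeticFunction.vonMangoldt_apply_prime h]
      · exact ArithmeticFunction.vonMangoldt_nonneg
    by_cases h : d ∣ k - 1
    · have : a k = ArithmeticFunction.vonMangoldt k := indicator_of_mem (show k ∈ {n : ℕ | (n : ZMod d) = 1} from hiff.mpr h) _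
      rw [this, if_pos h, mul_one]
      exact ⟨by linarith, le_rfl⟩
    · have : a k = 0 := indicator_of_notMem (show k ∉ {n : ℕ | (n : ZMod d) = 1} from fun h' => h (hiff.mp h')) _
      rw [this, if_neg h, mul_zero, sub_zero]
      exact ⟨le_rfl, by linarith⟩
  have hr : ∀ n : ℕ, ∑ p ∈ Finset.range (n + 1), lpw p * (if d ∣ p - 1 then 1 else 0) = ∑ p ∈ Finset.Icc 1 n, lpw p * (if d ∣ p - 1 then 1 else 0) := by
    intro n
    rw [Finset.range_eq_Ico, Finset.sum_eq_sum_Ico_succ_bot (by omega)]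
    simp only [lpw, Nat.not_prime_zero, if_false, zero_mul, zero_add]
    rfl
  have hdiff : Tendsto (fun n : ℕ => (∑ k ∈ Finset.Icc 1 n, a k) / n - (∑ p ∈ Finset.range (n + 1), lpw p * (if d ∣ p - 1 then 1 else 0)) / n) atTop (𝓝 0) := by
    refine tendsto_of_tendsto_of_tendsto_of_le_of_le' tendsto_const_nhds hlim ?_ ?_
    · refine Eventually.of_forall fun n => ?_
      rw [← sub_div, hr, ← Finset.sum_sub_distrib]
      apply div_nonneg _ (Nat.cast_nonneg n)
      exact Finset.sum_nonneg fun k hk => (hterm k (Finset.mem_Icc.mp hk).1).1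
    · filter_upwards [eventually_gt_atTop 0] with n hn
      rw [← sub_div, hr, ← Finset.sum_sub_distrib]
      gcongr
      have h1 : (1:ℝ) ≤ n := by exact_mod_cast hn
      refine le_trans ?_ (Chebyshev.psi_sub_theta_le h1)
      rw [← sum_lp_eq_theta, Finset.range_eq_Ico, Finset.sum_eq_sum_Ico_succ_bot (by omega)]
      unfold Chebyshev.psi
      rw [Nat.floor_natCast]
      have h2 : lpw 0 = 0 := by simp [lpw]
      rw [h2, zero_add]
      have e1 : Finset.Ico (0 + 1) (n + 1) = Finset.Icc 1 n := rfl
      have e2 : Finset.Ioc 0 n = Finset.Icc 1 n := rfl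
      rw [e1, e2, ← Finset.sum_sub_distrib]
      exact Finset.sum_le_sum fun k hk => (hterm k (Finset.mem_Icc.mp hk).1).2
  have := h0.sub hdiff
  rw [sub_zero] at this
  refine this.congr fun n => ?_
  ring

lemma ap_prod_bound (q M : ℕ) (hq : q.Prime) (T : Finset ℕ) (hT : ∀ p ∈ T, p.Prime ∧ M < p ∧ ∃ m < M, p = q * (m + 1) + 1) :
    ∏ p ∈ T, p ≤ q ^ (2 * M) * (M + 1) := by
  set N := ∏ m ∈ Finset.range M, (q * (m + 1) + 1) with hN
  set v := (M.factorial).factorization q with hv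
  set F := M.factorial / q ^ v with hF
  have hMF : q ^ v * F = M.factorial := Nat.ordProj_mul_ordCompl_eq_self _ _
  have hFpos : 0 < F := Nat.ordCompl_pos q M.factorial_ne_zero
  have hcop : Nat.Coprime q F := Nat.coprime_ordCompl hq M.factorial_ne_zero
  have hFN : F ∣ N := by
    haveI : NeZero F := ⟨hFpos.ne'⟩
    rw [← ZMod.natCast_eq_zero_iff]
    set u := ((q : ZMod F)⁻¹).val with hu
    have hqu : (q : ZMod F) * u = 1 := by
      rw [hu, ZMod.natCast_zmod_val]
      exact ZMod.coe_mul_inv_eq_one q hcop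
    have h1 : (N : ZMod F) = q ^ M * ((u + 1).ascFactorial M : ℕ) := by
      rw [hN, Nat.ascFactorial_eq_prod_range]
      push_cast
      rw [← Finset.card_range M, ← Finset.prod_const, Finset.card_range, ← Finset.prod_mul_distrib]
      apply Finset.prod_congr rfl
      intro m _
      linear_combination -hqu
    have h2 : (((u + 1).ascFactorial M : ℕ) : ZMod F) = 0 := by
      rw [ZMod.natCast_eq_zero_iff]
      exact (Dvd.intro_left _ hMF).trans (Nat.factorial_dvd_ascFactorial _ _)
    rw [h1, h2, mul_zero]
  have hPN : ∏ p ∈ T, p ∣ N := by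
    apply Finset.prod_primes_dvd
    · intro p hp; exact (hT p hp).1.prime
    · intro p hp
      obtain ⟨_, _, m, hm, rfl⟩ := hT p hp
      exact Finset.dvd_prod_of_mem (fun m => q * (m + 1) + 1) (Finset.mem_range.mpr hm)
  have hFP : Nat.Coprime F (∏ p ∈ T, p) := by
    apply Nat.Coprime.prod_right
    intro p hp
    obtain ⟨hpp, hMp, _⟩ := hT p hp
    rw [Nat.coprime_comm, hpp.coprime_iff_not_dvd]
    intro h
    have := hpp.dvd_factorial.mp (h.trans (Dvd.intro_left _ hMF))
    omega
  have hNpos : 0 < N := Finset.prod_pos fun _ _ => by positivity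
  have hle : F * ∏ p ∈ T, p ≤ N := Nat.le_of_dvd hNpos (hFP.mul_dvd_of_dvd_of_dvd hFN hPN)
  have hNle : N ≤ q ^ M * (M + 1).factorial := by
    calc N ≤ ∏ m ∈ Finset.range M, (q * (m + 1 + 1)) := by
          apply Finset.prod_le_prod' ; intro m _; have := hq.pos; nlinarith
      _ = q ^ M * ∏ m ∈ Finset.range M, (m + 1 + 1) := by
          rw [Finset.prod_mul_distrib, Finset.prod_const, Finset.card_range]
      _ = q ^ M * (M + 1).factorial := by
          rw [← Finset.prod_range_add_one_eq_factorial, Finset.prod_range_succ' _ M]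
          simp
  have hvM : v ≤ M := by
    haveI : Fact q.Prime := ⟨hq⟩
    have h := sub_one_mul_padicValNat_factorial (p := q) M
    rw [hv, Nat.factorization_def _ hq]
    have := hq.two_le
    calc padicValNat q M.factorial ≤ (q - 1) * padicValNat q M.factorial := Nat.le_mul_of_pos_left _ (by omega)
      _ ≤ M := by rw [h]; exact Nat.sub_le _ _
  have h1 : M.factorial * ∏ p ∈ T, p ≤ M.factorial * (q ^ (2 * M) * (M + 1)) := by
    calc M.factorial * ∏ p ∈ T, p = q ^ v * (F * ∏ p ∈ T, p) := by rw [← hMF]; ring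
      _ ≤ q ^ M * (q ^ M * (M + 1).factorial) :=
          Nat.mul_le_mul (Nat.pow_le_pow_right hq.pos hvM) (hle.trans hNle)
      _ = _ := by rw [Nat.factorial_succ]; ring
  exact Nat.le_of_mul_le_mul_left h1 M.factorial_pos

theorem brun_titch (q n : ℕ) (hq : q.Prime) :
    ∑ p ∈ Finset.range (n + 1), lpw p * (if q ∣ p - 1 then 1 else 0) ≤ 7 * (Real.log q / q) * n := by
  set M := n / q with hM
  have hqpos : (0:ℝ) < q := by exact_mod_cast hq.pos
  have hlog2 : Real.log 2 ≤ Real.log q := Real.log_le_log (by norm_num) (by exact_mod_cast hq.two_le)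
  have hl2 := Real.log_two_gt_d9
  have hMn : (M : ℝ) ≤ n / q := Nat.cast_div_le
  set T := (Finset.range (n + 1)).filter fun p => p.Prime ∧ M < p ∧ q ∣ p - 1 with hTdef
  have hT : ∀ p ∈ T, p.Prime ∧ M < p ∧ ∃ m < M, p = q * (m + 1) + 1 := by
    intro p hp
    rw [hTdef, Finset.mem_filter, Finset.mem_range] at hp
    obtain ⟨hpn, hpp, hMp, ⟨c, hc⟩⟩ := hp
    refine ⟨hpp, hMp, c - 1, ?_, ?_⟩
    · have hc0 : c ≠ 0 := by rintro rfl; have := hpp.two_le; omega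
      have : c ≤ n / q := by
        rw [Nat.le_div_iff_mul_le hq.pos]; rw [mul_comm]; omega
      omega
    · have hc0 : c ≠ 0 := by rintro rfl; have := hpp.two_le; omega
      have : c - 1 + 1 = c := by omega
      rw [this]
      have := hpp.two_le
      omega
  have hprod := ap_prod_bound q M hq T hT
  have h1 : ∑ p ∈ T, Real.log p ≤ 2 * M * Real.log q + M := by
    have e : Real.log ((∏ p ∈ T, p : ℕ) : ℝ) = ∑ p ∈ T, Real.log p := by
      push_cast
      rw [Real.log_prod]
      intro p hp
      exact_mod_cast (hT p hp).1.ne_zero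
    rw [← e]
    calc Real.log ((∏ p ∈ T, p : ℕ) : ℝ) ≤ Real.log ((q ^ (2 * M) * (M + 1) : ℕ) : ℝ) := by
          apply Real.log_le_log
          · exact_mod_cast Finset.prod_pos fun p hp => (hT p hp).1.pos
          · exact_mod_cast hprod
      _ = 2 * M * Real.log q + Real.log (M + 1) := by
          push_cast
          rw [Real.log_mul (by positivity) (by positivity), Real.log_pow]
          push_cast; ring
      _ ≤ _ := by
          have := Real.log_le_sub_one_of_pos (show (0:ℝ) < M + 1 by positivity)
          linarith
  have h2 : ∑ p ∈ Finset.range (n + 1), lpw p * (if q ∣ p - 1 then 1 else 0) ≤ ∑ p ∈ T, Real.log p + ∑ p ∈ Finset.range (M + 1), lpw p := by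
    have hsub : Finset.range (M + 1) ⊆ Finset.range (n + 1) := by
      apply Finset.range_subset_range.mpr
      have := Nat.div_le_self n q
      omega
    have e1 : ∑ p ∈ Finset.range (M + 1), lpw p = ∑ p ∈ Finset.range (n + 1), if p ∈ Finset.range (M + 1) then lpw p else 0 := by
      rw [← Finset.sum_filter, Finset.filter_mem_eq_inter, Finset.inter_eq_right.mpr hsub]
    rw [e1, hTdef, Finset.sum_filter, ← Finset.sum_add_distrib]
    apply Finset.sum_le_sum
    intro p _
    have h0 := lp_nonneg p
    by_cases hd : q ∣ p - 1
    · by_cases hpM : p ≤ M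
      · have : p ∈ Finset.range (M + 1) := Finset.mem_range.mpr (by omega)
        have h' : ¬ M < p := by omega
        simp [this, h', hd]
      · have : p ∉ Finset.range (M + 1) := fun h => hpM (by have := Finset.mem_range.mp h; omega)
        have h' : M < p := by omega
        by_cases hpp : p.Prime
        · simp [h', hd, hpp, lpw]
          rw [if_neg (by omega)]
        · simp [hpp, lpw]
    · simp only [hd, if_false, mul_zero, and_false]
      split_ifs <;> linarith
  have h3 : ∑ p ∈ Finset.range (M + 1), lpw p ≤ Real.log 4 * M := by
    rw [sum_lp_eq_theta]
    exact Chebyshev.theta_le_log4_mul_x (Nat.cast_nonneg M)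
  have hl4 : Real.log 4 = 2 * Real.log 2 := by
    rw [show (4:ℝ) = 2 ^ 2 by norm_num, Real.log_pow]; norm_num
  have hM0 : (0:ℝ) ≤ M := Nat.cast_nonneg M
  calc _ ≤ 2 * M * Real.log q + M + Real.log 4 * M := by linarith
    _ = M * (2 * Real.log q + 1 + 2 * Real.log 2) := by rw [hl4]; ring
    _ ≤ M * (7 * Real.log q) := by gcongr; linarith
    _ ≤ (n / q) * (7 * Real.log q) := by gcongr
    _ = _ := by ring


lemma artin_bd (n : ℕ) : ‖({p : ℕ | p.Prime}).indicator (fun n : ℕ => -(1 / ((n:ℝ) * ((n:ℝ) - 1)))) n‖ ≤ 2 * (1 / (n:ℝ) ^ 2) := by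
  by_cases h : n.Prime
  · rw [indicator_of_mem (show n ∈ {p : ℕ | p.Prime} from h)]
    have h2 : (2:ℝ) ≤ n := by exact_mod_cast h.two_le
    rw [norm_neg, Real.norm_of_nonneg (by apply div_nonneg; norm_num; nlinarith), mul_one_div, div_le_div_iff₀ (by nlinarith) (by positivity)]
    nlinarith
  · rw [indicator_of_notMem (show n ∉ {p : ℕ | p.Prime} from h)]
    simp

noncomputable def artP (y : ℕ) : ℝ := ∏ q ∈ Nat.primesBelow y, (1 - 1 / ((q:ℝ) * ((q:ℝ) - 1)))

lemma artP_tendsto : Tendsto artP atTop (𝓝 (∏' p : Nat.Primes, (1 - 1 / (((p : ℕ) : ℝ) * (((p : ℕ) : ℝ) - 1))))) := by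
  set g : ℕ → ℝ := fun n => 1 + ({p : ℕ | p.Prime}).indicator (fun n : ℕ => -(1 / ((n:ℝ) * ((n:ℝ) - 1)))) n with hg
  have hs : Summable (({p : ℕ | p.Prime}).indicator (fun n : ℕ => -(1 / ((n:ℝ) * ((n:ℝ) - 1))))) :=
    Summable.of_norm_bounded ((Real.summable_one_div_nat_pow.mpr (by norm_num : 1 < 2)).mul_left 2) artin_bd
  have hm : Multipliable g := Real.multipliable_one_add_of_summable hs
  have hgm : g = ({p : ℕ | p.Prime}).mulIndicator (fun n : ℕ => 1 - 1 / ((n:ℝ) * ((n:ℝ) - 1))) := by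
    funext n
    by_cases h : n ∈ {p : ℕ | p.Prime}
    · rw [hg]; simp only; rw [indicator_of_mem h, mulIndicator_of_mem h]; ring
    · rw [hg]; simp only; rw [indicator_of_notMem h, mulIndicator_of_notMem h]; ring
  have h1 := hm.hasProd.tendsto_prod_nat
  have h2 : ∏' n, g n = ∏' p : Nat.Primes, (1 - 1 / (((p : ℕ) : ℝ) * (((p : ℕ) : ℝ) - 1))) := by
    rw [hgm]
    exact (tprod_subtype {p : ℕ | p.Prime} (fun n : ℕ => 1 - 1 / ((n:ℝ) * ((n:ℝ) - 1)))).symm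
  rw [h2] at h1
  refine h1.congr fun y => ?_
  rw [artP, Nat.primesBelow, Finset.prod_filter]
  apply Finset.prod_congr rfl
  intro n _
  by_cases h : n.Prime
  · rw [hgm, if_pos h, mulIndicator_of_mem (show n ∈ {p : ℕ | p.Prime} from h)]
  · rw [hgm, if_neg h, mulIndicator_of_notMem (show n ∉ {p : ℕ | p.Prime} from h)]

noncomputable def fy (y n : ℕ) : ℝ := ∏ q ∈ Nat.primesBelow y, (1 - (if q ∣ n then 1 else 0) / (q:ℝ))

lemma totient_prod_primes (T : Finset ℕ) (hT : ∀ q ∈ T, q.Prime) :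
    ((∏ q ∈ T, q).totient : ℝ) = ∏ q ∈ T, ((q:ℝ) - 1) := by
  induction T using Finset.induction_on with
  | empty => simp
  | insert a s ha ih =>
    have hap := hT a (Finset.mem_insert_self a s)
    have hs : ∀ q ∈ s, q.Prime := fun q hq => hT q (Finset.mem_insert_of_mem hq)
    rw [Finset.prod_insert ha, Finset.prod_insert ha, Nat.totient_mul, Nat.cast_mul, ih hs, Nat.totient_prime hap, Nat.cast_sub hap.one_le, Nat.cast_one]
    apply Nat.Coprime.prod_right
    intro q hq
    exact (Nat.coprime_primes hap (hs q hq)).mpr (fun h => ha (h ▸ hq))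

lemma ind_prod (T : Finset ℕ) (hT : ∀ q ∈ T, q.Prime) (n : ℕ) :
    ∏ q ∈ T, (if q ∣ n then (1:ℝ) else 0) = if (∏ q ∈ T, q) ∣ n then 1 else 0 := by
  rw [Finset.prod_ite_zero]
  simp only [Finset.prod_const_one]
  congr 1
  apply propext
  constructor
  · intro h
    exact Finset.prod_primes_dvd n (fun q hq => (hT q hq).prime) h
  · intro h q hq
    exact (Finset.dvd_prod_of_mem (fun q => q) hq).trans h

lemma mean_fy (y : ℕ) : Tendsto (fun n : ℕ => (∑ p ∈ Finset.range (n + 1), lpw p * fy y (p - 1)) / n) atTop (𝓝 (artP y)) := by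
  have hpr : ∀ T ∈ (Nat.primesBelow y).powerset, ∀ q ∈ T, q.Prime := by
    intro T hT q hq
    exact Nat.prime_of_mem_primesBelow (Finset.mem_powerset.mp hT hq)
  have h1 : ∀ n, fy y n = ∑ T ∈ (Nat.primesBelow y).powerset, (∏ q ∈ T, (-1 / (q:ℝ))) * (if (∏ q ∈ T, q) ∣ n then 1 else 0) := by
    intro n
    unfold fy
    simp_rw [sub_eq_add_neg]
    rw [Finset.prod_one_add]
    apply Finset.sum_congr rfl
    intro T hT
    rw [← ind_prod T (hpr T hT), ← Finset.prod_mul_distrib]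
    apply Finset.prod_congr rfl
    intro q _
    ring
  have h2 : artP y = ∑ T ∈ (Nat.primesBelow y).powerset, (∏ q ∈ T, (-1 / (q:ℝ))) * ((∏ q ∈ T, q).totient : ℝ)⁻¹ := by
    unfold artP
    simp_rw [sub_eq_add_neg]
    rw [Finset.prod_one_add]
    apply Finset.sum_congr rfl
    intro T hT
    rw [totient_prod_primes T (hpr T hT), ← Finset.prod_inv_distrib, ← Finset.prod_mul_distrib]
    apply Finset.prod_congr rfl
    intro q _
    rw [← sub_eq_add_neg, one_div, mul_inv]
    ring
  rw [h2]
  have h3 : Tendsto (fun n : ℕ => ∑ T ∈ (Nat.primesBelow y).powerset, (∏ q ∈ T, (-1 / (q:ℝ))) *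
      ((∑ p ∈ Finset.range (n + 1), lpw p * (if (∏ q ∈ T, q) ∣ p - 1 then 1 else 0)) / n)) atTop
      (𝓝 (∑ T ∈ (Nat.primesBelow y).powerset, (∏ q ∈ T, (-1 / (q:ℝ))) * ((∏ q ∈ T, q).totient : ℝ)⁻¹)) := by
    apply tendsto_finsetSum
    intro T hT
    have : NeZero (∏ q ∈ T, q) := ⟨Finset.prod_ne_zero_iff.mpr fun q hq => (hpr T hT q hq).ne_zero⟩
    exact (pnt_ap_theta (∏ q ∈ T, q)).const_mul _
  refine h3.congr fun n => ?_
  simp_rw [h1, Finset.mul_sum]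
  rw [Finset.sum_comm, Finset.sum_div]
  apply Finset.sum_congr rfl
  intro T _
  rw [← mul_div_assoc, Finset.mul_sum]
  congr 1
  apply Finset.sum_congr rfl
  intro p _
  ring

lemma one_sub_sum_le_prod (s : Finset ℕ) (a : ℕ → ℝ) (h : ∀ i ∈ s, 0 ≤ a i ∧ a i ≤ 1) :
    1 - ∑ i ∈ s, a i ≤ ∏ i ∈ s, (1 - a i) ∧ ∏ i ∈ s, (1 - a i) ≤ 1 ∧ 0 ≤ ∏ i ∈ s, (1 - a i) := by
  induction s using Finset.induction_on with
  | empty => simp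
  | insert b s hb ih =>
    obtain ⟨h1, h2, h3⟩ := ih fun i hi => h i (Finset.mem_insert_of_mem hi)
    obtain ⟨h4, h5⟩ := h b (Finset.mem_insert_self b s)
    rw [Finset.sum_insert hb, Finset.prod_insert hb]
    refine ⟨?_, ?_, ?_⟩ <;> nlinarith

lemma prime_inv_bd (q : ℕ) : 0 ≤ (1:ℝ) / q ∧ (1:ℝ) / q ≤ 1 := by
  refine ⟨by positivity, ?_⟩
  rcases Nat.eq_zero_or_pos q with rfl | h
  · simp
  · rw [div_le_one (by exact_mod_cast h)]; exact_mod_cast h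

lemma fy_sub (y n : ℕ) (hn : 1 ≤ n) : 0 ≤ fy y n - n.totient / n ∧
    fy y n - n.totient / n ≤ ∑ q ∈ (Finset.Ico y (n + 1)).filter Nat.Prime, (if q ∣ n then 1 else 0) / (q:ℝ) := by
  have hn0 : (n:ℝ) ≠ 0 := by positivity
  have h1 : (n.totient : ℝ) / n = ∏ q ∈ n.primeFactors, (1 - 1 / (q:ℝ)) := by
    rw [div_eq_iff hn0]
    have := Nat.totient_eq_mul_prod_factors n
    have h := congrArg (fun x : ℚ => (x : ℝ)) this
    push_cast at h
    rw [h, mul_comm]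
    simp only [one_div]
  have h2 : fy y n = ∏ q ∈ n.primeFactors.filter (· < y), (1 - 1 / (q:ℝ)) := by
    unfold fy
    rw [show n.primeFactors.filter (· < y) = (Nat.primesBelow y).filter (· ∣ n) by
      ext q; simp only [Finset.mem_filter, Nat.mem_primeFactors, Nat.mem_primesBelow]; constructor
      · rintro ⟨⟨a, b, c⟩, d⟩; exact ⟨⟨d, a⟩, b⟩
      · rintro ⟨⟨a, b⟩, c⟩; exact ⟨⟨b, c, by omega⟩, a⟩]
    rw [Finset.prod_filter]
    apply Finset.prod_congr rfl
    intro q _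
    split_ifs <;> simp
  have h3 : ∑ q ∈ (Finset.Ico y (n + 1)).filter Nat.Prime, (if q ∣ n then 1 else 0) / (q:ℝ) = ∑ q ∈ n.primeFactors.filter (¬ · < y), 1 / (q:ℝ) := by
    rw [show n.primeFactors.filter (¬ · < y) = ((Finset.Ico y (n + 1)).filter Nat.Prime).filter (· ∣ n) by
      ext q; simp only [Finset.mem_filter, Nat.mem_primeFactors, Finset.mem_Ico]; constructor
      · rintro ⟨⟨a, b, c⟩, d⟩; exact ⟨⟨⟨by omega, by have := Nat.le_of_dvd hn b; omega⟩, a⟩, b⟩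
      · rintro ⟨⟨⟨a, a'⟩, b⟩, c⟩; exact ⟨⟨b, c, by omega⟩, by omega⟩]
    rw [Finset.sum_filter (s := (Finset.Ico y (n + 1)).filter Nat.Prime)]
    apply Finset.sum_congr rfl
    intro q _
    split_ifs <;> simp
  rw [h1, h2, h3, ← Finset.prod_filter_mul_prod_filter_not n.primeFactors (· < y)]
  obtain ⟨a1, a2, a3⟩ := one_sub_sum_le_prod (n.primeFactors.filter (· < y)) (fun q => 1 / (q:ℝ)) fun i _ => prime_inv_bd i
  obtain ⟨b1, b2, b3⟩ := one_sub_sum_le_prod (n.primeFactors.filter (¬ · < y)) (fun q => 1 / (q:ℝ)) fun i _ => prime_inv_bd i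
  have b4 : 0 ≤ ∑ q ∈ n.primeFactors.filter (¬ · < y), 1 / (q:ℝ) := Finset.sum_nonneg fun i _ => (prime_inv_bd i).1
  constructor <;> nlinarith

lemma log_sq_summable : Summable (fun n : ℕ => Real.log n / (n:ℝ) ^ 2) := by
  have h : Summable (fun n : ℕ => 2 * (1 / (n:ℝ) ^ (3/2 : ℝ))) := (Real.summable_one_div_nat_rpow.mpr (by norm_num)).mul_left 2
  refine Summable.of_nonneg_of_le (fun n => div_nonneg (Real.log_natCast_nonneg n) (by positivity)) (fun n => ?_) h
  rcases Nat.eq_zero_or_pos n with rfl | hn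
  · simp
  have hn' : (0:ℝ) < n := by exact_mod_cast hn
  have h1 := Real.log_le_rpow_div hn'.le (show (0:ℝ) < 1/2 by norm_num)
  have e : (n:ℝ) ^ 2 = (n:ℝ) ^ (1/2:ℝ) * (n:ℝ) ^ (3/2:ℝ) := by
    rw [← Real.rpow_add hn', ← Real.rpow_natCast]; norm_num
  rw [mul_one_div, div_le_div_iff₀ (by positivity) (by positivity), e]
  have : 0 < (n:ℝ) ^ (3/2:ℝ) := by positivity
  nlinarith

lemma tail_bd (y n : ℕ) : ∑ p ∈ Finset.range (n + 1), lpw p * (fy y (p - 1) - (p - 1).totient / ((p - 1 : ℕ) : ℝ)) ≤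
    7 * n * ∑' i : ℕ, Real.log ((i + y : ℕ) : ℝ) / ((i + y : ℕ) : ℝ) ^ 2 := by
  have hsum := (summable_nat_add_iff y).mpr log_sq_summable
  calc ∑ p ∈ Finset.range (n + 1), lpw p * (fy y (p - 1) - (p - 1).totient / ((p - 1 : ℕ) : ℝ))
      ≤ ∑ p ∈ Finset.range (n + 1), lpw p * ∑ q ∈ (Finset.Ico y (n + 1)).filter Nat.Prime, (if q ∣ p - 1 then 1 else 0) / (q:ℝ) := by
        apply Finset.sum_le_sum
        intro p hp
        by_cases hpp : p.Prime
        · refine mul_le_mul_of_nonneg_left ?_ (lp_nonneg p)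
          have := hpp.two_le
          refine (fy_sub y (p - 1) (by omega)).2.trans ?_
          apply Finset.sum_le_sum_of_subset_of_nonneg
          · apply Finset.filter_subset_filter
            apply Finset.Ico_subset_Ico_right
            have := Finset.mem_range.mp hp
            omega
          · intro q _ _; positivity
        · simp [lpw, hpp]
    _ = ∑ q ∈ (Finset.Ico y (n + 1)).filter Nat.Prime, (1 / (q:ℝ)) * ∑ p ∈ Finset.range (n + 1), lpw p * (if q ∣ p - 1 then 1 else 0) := by
        simp_rw [Finset.mul_sum]
        rw [Finset.sum_comm]
        refine Finset.sum_congr rfl fun q _ => Finset.sum_congr rfl fun p _ => ?_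
        ring
    _ ≤ ∑ q ∈ (Finset.Ico y (n + 1)).filter Nat.Prime, 7 * n * (Real.log q / (q:ℝ) ^ 2) := by
        apply Finset.sum_le_sum
        intro q hq
        have hqp := (Finset.mem_filter.mp hq).2
        calc (1 / (q:ℝ)) * ∑ p ∈ Finset.range (n + 1), lpw p * (if q ∣ p - 1 then 1 else 0) ≤ (1 / (q:ℝ)) * (7 * (Real.log q / q) * n) :=
              mul_le_mul_of_nonneg_left (brun_titch q n hqp) (by positivity)
          _ = _ := by
            have : (q:ℝ) ≠ 0 := by exact_mod_cast hqp.ne_zero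
            field_simp
    _ ≤ ∑ q ∈ Finset.Ico y (n + 1), 7 * n * (Real.log q / (q:ℝ) ^ 2) := by
        apply Finset.sum_le_sum_of_subset_of_nonneg (Finset.filter_subset _ _)
        intro q _ _
        have := Real.log_natCast_nonneg q
        positivity
    _ ≤ _ := by
        rw [← Finset.mul_sum, Finset.sum_Ico_eq_sum_range]
        refine mul_le_mul_of_nonneg_left ?_ (by positivity)
        refine le_trans (le_of_eq ?_) (hsum.sum_le_tsum (Finset.range (n + 1 - y)) ?_)
        · refine Finset.sum_congr rfl fun i _ => ?_
          rw [add_comm y i]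
        · intro i _
          exact div_nonneg (Real.log_natCast_nonneg _) (by positivity)

noncomputable def artA : ℝ := ∏' p : Nat.Primes, (1 - 1 / (((p : ℕ) : ℝ) * (((p : ℕ) : ℝ) - 1)))

theorem mean_f : Tendsto (fun n : ℕ => (∑ p ∈ Finset.range (n + 1), lpw p * ((p - 1).totient / ((p - 1 : ℕ) : ℝ))) / n) atTop (𝓝 artA) := by
  rw [Metric.tendsto_atTop]
  intro ε hε
  have hA : Tendsto artP atTop (𝓝 artA) := artP_tendsto
  have hT := (tendsto_sum_nat_add (fun n : ℕ => Real.log n / (n:ℝ) ^ 2)).const_mul 7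
  rw [mul_zero] at hT
  obtain ⟨y, hy1, hy2⟩ := ((hA.eventually (Metric.ball_mem_nhds _ (show 0 < ε / 3 by positivity))).and
    (hT.eventually (Metric.ball_mem_nhds _ (show 0 < ε / 3 by positivity)))).exists
  obtain ⟨N, hN⟩ := Metric.tendsto_atTop.mp (mean_fy y) (ε / 3) (by positivity)
  refine ⟨max N 1, fun n hn => ?_⟩
  have h1 := hN n (le_trans (le_max_left _ _) hn)
  have hn1 : 1 ≤ n := le_trans (le_max_right _ _) hn
  have hn0 : (0:ℝ) < n := by exact_mod_cast hn1
  have h2 := tail_bd y n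
  have h3 : 0 ≤ ∑ p ∈ Finset.range (n + 1), lpw p * (fy y (p - 1) - (p - 1).totient / ((p - 1 : ℕ) : ℝ)) := by
    apply Finset.sum_nonneg
    intro p _
    by_cases hpp : p.Prime
    · have := hpp.two_le
      exact mul_nonneg (lp_nonneg p) (fy_sub y (p - 1) (by omega)).1
    · simp [lpw, hpp]
  have e : ∑ p ∈ Finset.range (n + 1), lpw p * (fy y (p - 1) - (p - 1).totient / ((p - 1 : ℕ) : ℝ)) =
    ∑ p ∈ Finset.range (n + 1), lpw p * fy y (p - 1) - ∑ p ∈ Finset.range (n + 1), lpw p * ((p - 1).totient / ((p - 1 : ℕ) : ℝ)) := by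
    rw [← Finset.sum_sub_distrib]
    exact Finset.sum_congr rfl fun p _ => mul_sub _ _ _
  rw [e] at h2 h3
  set U := ∑ p ∈ Finset.range (n + 1), lpw p * fy y (p - 1)
  set V := ∑ p ∈ Finset.range (n + 1), lpw p * ((p - 1).totient / ((p - 1 : ℕ) : ℝ))
  set t := ∑' i : ℕ, Real.log ((i + y : ℕ) : ℝ) / ((i + y : ℕ) : ℝ) ^ 2
  have h4 : U / n - V / n ≤ 7 * t := by
    rw [← sub_div, div_le_iff₀ hn0]; linarith
  have h5 : 0 ≤ U / n - V / n := by
    rw [← sub_div]; positivity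
  rw [Real.dist_eq, abs_lt] at hy1 hy2
  rw [Real.dist_eq, abs_lt] at h1 ⊢
  constructor <;> linarith [hy1.1, hy1.2, hy2.2, h1.1, h1.2]


noncomputable def rk (k p : ℕ) : ℝ := ((p ^ (k + 1)).totient.totient : ℝ) / ((p ^ (k + 1)).totient : ℝ)

lemma rk_bd (k p : ℕ) (hp : p.Prime) : 0 ≤ (p - 1).totient / ((p - 1 : ℕ) : ℝ) - rk k p ∧
    (p - 1).totient / ((p - 1 : ℕ) : ℝ) - rk k p ≤ 1 / p := by
  have h2 := hp.two_le
  have hp0 : (0:ℝ) < p := by exact_mod_cast hp.pos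
  have hp1 : (0:ℝ) < ((p - 1 : ℕ) : ℝ) := by exact_mod_cast (by omega : 0 < p - 1)
  have hf1 : ((p - 1).totient : ℝ) / ((p - 1 : ℕ) : ℝ) ≤ 1 := by
    rw [div_le_one hp1]; exact_mod_cast Nat.totient_le _
  have hf0 : 0 ≤ ((p - 1).totient : ℝ) / ((p - 1 : ℕ) : ℝ) := by positivity
  have hcop : Nat.Coprime (p ^ k) (p - 1) := by
    apply Nat.Coprime.pow_left
    rw [hp.coprime_iff_not_dvd]
    intro h
    have := Nat.le_of_dvd (by omega) h
    omega
  have e : rk k p = ((p ^ k).totient / (p:ℝ) ^ k) * ((p - 1).totient / ((p - 1 : ℕ) : ℝ)) := by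
    unfold rk
    rw [Nat.totient_prime_pow_succ hp, Nat.totient_mul hcop]
    push_cast
    rw [mul_div_mul_comm]
  have hc : 1 - 1 / (p:ℝ) ≤ (p ^ k).totient / (p:ℝ) ^ k ∧ (p ^ k).totient / (p:ℝ) ^ k ≤ 1 := by
    have hi : 0 < 1 / (p:ℝ) := by positivity
    cases k with
    | zero => simp
    | succ j =>
      have : ((p ^ (j + 1)).totient : ℝ) / (p:ℝ) ^ (j + 1) = 1 - 1 / p := by
        rw [Nat.totient_prime_pow_succ hp]
        push_cast [Nat.cast_sub hp.one_le]
        field_simp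
        ring
      rw [this]
      exact ⟨le_rfl, by linarith⟩
  rw [e]
  set c := ((p ^ k).totient : ℝ) / (p:ℝ) ^ k
  set f := ((p - 1).totient : ℝ) / ((p - 1 : ℕ) : ℝ)
  constructor <;> nlinarith [hc.1, hc.2]

lemma log_div_tendsto : Tendsto (fun n : ℕ => Real.log n / n) atTop (𝓝 0) := by
  have h := (isLittleO_log_rpow_atTop (show (0:ℝ) < 1 by norm_num)).tendsto_div_nhds_zero.comp tendsto_natCast_atTop_atTop
  refine h.congr fun n => ?_
  simp

theorem mean_r (k : ℕ) : Tendsto (fun n : ℕ => (∑ p ∈ Finset.range (n + 1), lpw p * rk k p) / n) atTop (𝓝 artA) := by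
  have hc := ((log_div_tendsto.cesaro).comp (tendsto_add_atTop_nat 1)).const_mul 2
  rw [mul_zero] at hc
  have hd : ∀ p, 0 ≤ lpw p * ((p - 1).totient / ((p - 1 : ℕ) : ℝ) - rk k p) ∧ lpw p * ((p - 1).totient / ((p - 1 : ℕ) : ℝ) - rk k p) ≤ Real.log p / p := by
    intro p
    by_cases hp : p.Prime
    · obtain ⟨h1, h2⟩ := rk_bd k p hp
      refine ⟨mul_nonneg (lp_nonneg p) h1, ?_⟩
      rw [div_eq_mul_one_div (Real.log p)]
      exact mul_le_mul (lp_le_log p) h2 h1 (Real.log_natCast_nonneg p)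
    · simp only [lpw, hp, if_false, zero_mul, le_refl, true_and]
      exact div_nonneg (Real.log_natCast_nonneg p) (by positivity)
  have hdiff : Tendsto (fun n : ℕ => (∑ p ∈ Finset.range (n + 1), lpw p * ((p - 1).totient / ((p - 1 : ℕ) : ℝ) - rk k p)) / n) atTop (𝓝 0) := by
    refine tendsto_of_tendsto_of_tendsto_of_le_of_le' tendsto_const_nhds hc ?_ ?_
    · exact Eventually.of_forall fun n => div_nonneg (Finset.sum_nonneg fun p _ => (hd p).1) (by positivity)
    · filter_upwards [eventually_gt_atTop 0] with n hn
      have hn0 : (1:ℝ) ≤ n := by exact_mod_cast hn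
      simp only [Function.comp]
      set S := ∑ i ∈ Finset.range (n + 1), Real.log i / (i:ℝ)
      have hS : 0 ≤ S := Finset.sum_nonneg fun p _ => (hd p).1.trans (hd p).2
      calc _ ≤ S / n := by
            gcongr
            exact Finset.sum_le_sum fun p _ => (hd p).2
        _ ≤ _ := by
            push_cast
            rw [← mul_assoc, mul_comm, div_eq_mul_inv]
            refine mul_le_mul_of_nonneg_left ?_ hS
            rw [← div_eq_mul_inv, inv_eq_one_div, div_le_div_iff₀ (by positivity) (by positivity)]
            linarith
  have := mean_f.sub hdiff
  rw [sub_zero] at this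
  refine this.congr fun n => ?_
  rw [← sub_div, ← Finset.sum_sub_distrib]
  congr 1
  refine Finset.sum_congr rfl fun p _ => ?_
  ring

noncomputable def wk (k m : ℕ) : ℝ := (m:ℝ) ^ k * ((m:ℝ) - 1) / Real.log m

lemma wk_nonneg (k m : ℕ) : 0 ≤ wk k m := by
  unfold wk
  rcases m with _ | m
  · simp
  · apply div_nonneg _ (Real.log_natCast_nonneg _)
    push_cast
    rw [add_sub_cancel_right]
    positivity

lemma wk_mono (k : ℕ) : Monotone (wk k) := by
  apply monotone_nat_of_le_succ
  intro m
  rcases Nat.lt_or_ge m 2 with h | h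
  · have : wk k m = 0 := by
      interval_cases m <;> simp [wk]
    rw [this]; exact wk_nonneg _ _
  · have h2 : (2:ℝ) ≤ m := by exact_mod_cast h
    have hl : 0 < Real.log m := Real.log_pos (by linarith)
    have hl' : 0 < Real.log (m + 1) := Real.log_pos (by linarith)
    have a1 : Real.log (m + 1) ≤ Real.log m + 1 / m := by
      have e : (m:ℝ) + 1 = m * (1 + 1 / m) := by field_simp
      rw [e, Real.log_mul (by positivity) (by positivity)]
      have := Real.log_le_sub_one_of_pos (show (0:ℝ) < 1 + 1 / m by positivity)
      linarith
    have a2 := Real.one_sub_inv_le_log_of_pos (show (0:ℝ) < m by linarith)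
    unfold wk
    push_cast
    rw [mul_div_assoc, mul_div_assoc, add_sub_cancel_right]
    apply mul_le_mul
    · gcongr; linarith
    · rw [div_le_div_iff₀ hl hl']
      have e2 : ((m:ℝ) - 1) * (1 / m) = 1 - (m:ℝ)⁻¹ := by field_simp
      have : ((m:ℝ) - 1) * Real.log (m + 1) ≤ ((m:ℝ) - 1) * (Real.log m + 1 / m) := mul_le_mul_of_nonneg_left a1 (by linarith)
      rw [mul_add, e2] at this
      linarith
    · apply div_nonneg _ hl.le; linarith
    · positivity

lemma wk_double (k m N : ℕ) (hm : 2 ≤ m) (h1 : m ≤ N) (h2 : N ≤ 2 * m + 1) : wk k N ≤ 4 * 3 ^ k * wk k m := by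
  have hm' : (2:ℝ) ≤ m := by exact_mod_cast hm
  have h1' : (m:ℝ) ≤ N := by exact_mod_cast h1
  have h2' : (N:ℝ) ≤ 2 * m + 1 := by exact_mod_cast h2
  have hl : 0 < Real.log m := Real.log_pos (by linarith)
  have hll : Real.log m ≤ Real.log N := Real.log_le_log (by linarith) h1'
  unfold wk
  calc (N:ℝ) ^ k * ((N:ℝ) - 1) / Real.log N ≤ ((3 * m) ^ k * (4 * ((m:ℝ) - 1))) / Real.log m := by
        apply div_le_div₀
        · have : (0:ℝ) ≤ m - 1 := by linarith
          positivity
        · apply mul_le_mul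
          · apply pow_le_pow_left₀ <;> linarith
          · linarith
          · linarith
          · positivity
        · exact hl
        · exact hll
    _ = _ := by rw [mul_pow]; ring

lemma wk_prime (k p : ℕ) (hp : p.Prime) : wk k p * Real.log p = ((p ^ (k + 1)).totient : ℝ) := by
  have : Real.log p ≠ 0 := (Real.log_pos (by exact_mod_cast hp.one_lt)).ne'
  unfold wk
  rw [div_mul_cancel₀ _ this, Nat.totient_prime_pow_succ hp]
  push_cast [Nat.cast_sub hp.one_le]
  ring

lemma wk_sum (k N : ℕ) : ∑ p ∈ Finset.range (N + 1), wk k p * lpw p = ∑ p ∈ (Finset.range (N + 1)).filter Nat.Prime, ((p ^ (k + 1)).totient : ℝ) := by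
  rw [Finset.sum_filter]
  refine Finset.sum_congr rfl fun p _ => ?_
  unfold lpw
  split_ifs with h
  · exact wk_prime k p h
  · simp

lemma wk_sum2 (k N : ℕ) : ∑ p ∈ Finset.range (N + 1), wk k p * (lpw p * rk k p) = ∑ p ∈ (Finset.range (N + 1)).filter Nat.Prime, ((p ^ (k + 1)).totient.totient : ℝ) := by
  rw [Finset.sum_filter]
  refine Finset.sum_congr rfl fun p _ => ?_
  unfold lpw
  split_ifs with h
  · rw [← mul_assoc, wk_prime k p h, rk, mul_div_cancel₀]
    have : 0 < (p ^ (k + 1)).totient := Nat.totient_pos.mpr (pow_pos h.pos _)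
    exact_mod_cast this.ne'
  · simp

lemma abel_bd (w e : ℕ → ℝ) (hw : Monotone w) (hw0 : ∀ m, 0 ≤ w m) (B : ℝ) (M : ℕ)
    (hB : ∀ n ≤ M, |∑ m ∈ Finset.range (n + 1), e m| ≤ B) :
    |∑ m ∈ Finset.range (M + 1), w m * e m| ≤ 2 * B * w M := by
  have key : ∀ n ≤ M, |∑ m ∈ Finset.range (n + 1), w m * e m - w n * ∑ m ∈ Finset.range (n + 1), e m| ≤ B * w n := by
    intro n
    induction n with
    | zero =>
      intro _
      have hB0 : 0 ≤ B := (abs_nonneg _).trans (hB 0 (Nat.zero_le _))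
      simp
      exact mul_nonneg hB0 (hw0 0)
    | succ n ih =>
      intro hn
      have h1 := ih (by omega)
      have h2 := hB n (by omega)
      have hm := hw (Nat.le_succ n)
      rw [Nat.succ_eq_add_one] at hm
      rw [Finset.sum_range_succ _ (n + 1), Finset.sum_range_succ _ (n + 1)]
      rw [abs_le] at *
      constructor <;> nlinarith [h1.1, h1.2, h2.1, h2.2]
  have h1 := key M le_rfl
  have h2 := hB M le_rfl
  have h3 := hw0 M
  rw [abs_le] at *
  constructor <;> nlinarith [h1.1, h1.2, h2.1, h2.2]

lemma theta_lim : Tendsto (fun n : ℕ => (∑ p ∈ Finset.range (n + 1), lpw p) / n) atTop (𝓝 1) := by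
  have := pnt_ap_theta 1
  simpa using this

lemma denom_bd (k : ℕ) : ∀ᶠ N : ℕ in atTop, wk k N * N ≤ 16 * 3 ^ k * ∑ p ∈ Finset.range (N + 1), wk k p * lpw p := by
  obtain ⟨N0, hN0⟩ := Metric.tendsto_atTop.mp theta_lim (1 / 10) (by norm_num)
  filter_upwards [eventually_ge_atTop (2 * N0 + 4)] with N hN
  set m := N / 2 with hm
  have hθN := hN0 N (by omega)
  have hθm := hN0 m (by omega)
  have hNpos : (0:ℝ) < N := by exact_mod_cast (by omega : 0 < N)
  have hmpos : (0:ℝ) < m := by exact_mod_cast (by omega : 0 < m)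
  have hmN : 2 * (m:ℝ) ≤ N := by exact_mod_cast (by omega : 2 * m ≤ N)
  rw [Real.dist_eq, abs_lt] at hθN hθm
  have a1 : 9 / 10 * (N:ℝ) ≤ ∑ p ∈ Finset.range (N + 1), lpw p := by
    rw [← le_div_iff₀ hNpos]; linarith [hθN.1]
  have a2 : ∑ p ∈ Finset.range (m + 1), lpw p ≤ 11 / 10 * (m:ℝ) := by
    rw [← div_le_iff₀ hmpos]; linarith [hθm.2]
  have hle : m + 1 ≤ N + 1 := by omega
  have a3 : wk k m * (∑ p ∈ Finset.range (N + 1), lpw p - ∑ p ∈ Finset.range (m + 1), lpw p) ≤ ∑ p ∈ Finset.range (N + 1), wk k p * lpw p := by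
    rw [← Finset.sum_Ico_eq_sub _ hle, Finset.mul_sum, ← Finset.sum_range_add_sum_Ico _ hle]
    have : 0 ≤ ∑ p ∈ Finset.range (m + 1), wk k p * lpw p := Finset.sum_nonneg fun p _ => mul_nonneg (wk_nonneg k p) (lp_nonneg p)
    have h' : ∑ p ∈ Finset.Ico (m + 1) (N + 1), wk k m * lpw p ≤ ∑ p ∈ Finset.Ico (m + 1) (N + 1), wk k p * lpw p := by
      refine Finset.sum_le_sum fun p hp => mul_le_mul_of_nonneg_right (wk_mono k ?_) (lp_nonneg p)
      have := (Finset.mem_Ico.mp hp).1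
      omega
    linarith
  have a4 := wk_double k m N (by omega) (by omega) (by omega)
  have hw := wk_nonneg k m
  have a5 : wk k m * ((1:ℝ) / 4 * N) ≤ ∑ p ∈ Finset.range (N + 1), wk k p * lpw p := by
    refine le_trans (mul_le_mul_of_nonneg_left ?_ hw) a3
    linarith
  calc wk k N * N ≤ 4 * 3 ^ k * wk k m * N := by gcongr
    _ = 16 * 3 ^ k * (wk k m * ((1:ℝ) / 4 * N)) := by ring
    _ ≤ _ := by gcongr

theorem ratio_lim (k : ℕ) : Tendsto (fun N : ℕ =>
    (∑ p ∈ (Finset.range (N + 1)).filter Nat.Prime, ((p ^ (k + 1)).totient.totient : ℝ)) /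
    (∑ p ∈ (Finset.range (N + 1)).filter Nat.Prime, ((p ^ (k + 1)).totient : ℝ))) atTop (𝓝 artA) := by
  have hE : Tendsto (fun n : ℕ => (∑ p ∈ Finset.range (n + 1), lpw p * (rk k p - artA)) / n) atTop (𝓝 0) := by
    have h := (mean_r k).sub (theta_lim.mul_const artA)
    rw [one_mul, sub_self] at h
    refine h.congr fun n => ?_
    rw [div_mul_eq_mul_div, ← sub_div, Finset.sum_mul, ← Finset.sum_sub_distrib]
    congr 1
    exact Finset.sum_congr rfl fun p _ => by ring
  rw [Metric.tendsto_atTop]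
  intro ε hε
  set c : ℝ := 16 * 3 ^ k with hc
  have hcpos : 0 < c := by positivity
  set δ : ℝ := ε / (8 * c) with hδ
  have hδpos : 0 < δ := by positivity
  obtain ⟨N0, hN0⟩ := Metric.tendsto_atTop.mp hE δ hδpos
  set C : ℝ := ∑ n ∈ Finset.range (N0 + 1), |∑ p ∈ Finset.range (n + 1), lpw p * (rk k p - artA)| with hC
  have hCnn : 0 ≤ C := Finset.sum_nonneg fun _ _ => abs_nonneg _
  have hEb : ∀ n : ℕ, |∑ p ∈ Finset.range (n + 1), lpw p * (rk k p - artA)| ≤ δ * n + C := by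
    intro n
    by_cases h : n ≤ N0
    · have := Finset.single_le_sum (f := fun n => |∑ p ∈ Finset.range (n + 1), lpw p * (rk k p - artA)|) (fun _ _ => abs_nonneg _) (Finset.mem_range.mpr (by omega : n < N0 + 1))
      have h' : 0 ≤ δ * n := by positivity
      linarith
    · have h1 := hN0 n (by omega)
      have hn : (0:ℝ) < n := by exact_mod_cast (by omega : 0 < n)
      rw [Real.dist_eq, sub_zero, abs_div, abs_of_pos hn, div_lt_iff₀ hn] at h1
      linarith
  obtain ⟨N1, hN1⟩ := eventually_atTop.mp (denom_bd k)
  obtain ⟨N2, hN2⟩ := exists_nat_gt (C / δ)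
  refine ⟨max N1 (max N2 2), fun N hN => ?_⟩
  have hd := hN1 N (le_trans (le_max_left _ _) hN)
  have hNN2 : N2 ≤ N := le_trans (le_trans (le_max_left _ _) (le_max_right _ _)) hN
  have hN2' : 2 ≤ N := le_trans (le_trans (le_max_right _ _) (le_max_right _ _)) hN
  have hCN : C ≤ δ * N := by
    have : C / δ ≤ N := hN2.le.trans (by exact_mod_cast hNN2)
    rw [div_le_iff₀ hδpos] at this
    linarith
  have hNpos : (0:ℝ) < N := by exact_mod_cast (by omega : 0 < N)
  have hwpos : 0 < wk k N := by
    unfold wk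
    have h1 : (1:ℝ) < N := by exact_mod_cast (by omega : 1 < N)
    have := Real.log_pos h1
    have : 0 < (N:ℝ) - 1 := by linarith
    positivity
  rw [← wk_sum, ← wk_sum2]
  set D := ∑ p ∈ Finset.range (N + 1), wk k p * lpw p with hD
  have hab := abel_bd (wk k) (fun p => lpw p * (rk k p - artA)) (wk_mono k) (wk_nonneg k) (2 * δ * N) N (by
    intro n hn
    have h1 : (n:ℝ) ≤ N := by exact_mod_cast hn
    refine (hEb n).trans ?_
    nlinarith)
  have hnum : ∑ p ∈ Finset.range (N + 1), wk k p * (lpw p * (rk k p - artA)) = ∑ p ∈ Finset.range (N + 1), wk k p * (lpw p * rk k p) - artA * D := by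
    rw [hD, Finset.mul_sum, ← Finset.sum_sub_distrib]
    exact Finset.sum_congr rfl fun p _ => by ring
  rw [hnum] at hab
  have hDpos : 0 < D := by
    have : 0 < wk k N * N := by positivity
    by_contra h
    push Not at h
    nlinarith
  rw [Real.dist_eq, div_sub' hDpos.ne', abs_div, abs_of_pos hDpos, div_lt_iff₀ hDpos]
  rw [mul_comm D artA]
  calc _ ≤ 2 * (2 * δ * N) * wk k N := hab
    _ = 4 * δ * (wk k N * N) := by ring
    _ ≤ 4 * δ * (c * D) := by gcongr
    _ = ε / 2 * D := by rw [hδ]; field_simp; norm_num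
    _ < ε * D := by nlinarith

lemma sum_nth_prime (g : ℕ → ℝ) (N : ℕ) : ∑ i ∈ Finset.range N, g (Nat.nth Nat.Prime i) =
    ∑ p ∈ (Finset.range (Nat.nth Nat.Prime N)).filter Nat.Prime, g p := by
  induction N with
  | zero =>
    rw [Nat.nth_prime_zero_eq_two, show (Finset.range 2).filter Nat.Prime = ∅ by decide]
    simp
  | succ n ih =>
    rw [Finset.sum_range_succ, ih, Nat.filter_range_nth_eq_insert_of_infinite Nat.infinite_setOfPred_prime, Finset.sum_insert (by simp), add_comm]

theorem final_thm (k : ℕ) :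
    Tendsto (fun N : ℕ =>
        (∑ i ∈ Finset.range N, (((Nat.nth Nat.Prime i ^ (k + 1)).totient).totient : ℝ)) /
        (∑ i ∈ Finset.range N, ((Nat.nth Nat.Prime i ^ (k + 1)).totient : ℝ)))
      atTop (nhds artA) := by
  have h1 : Tendsto (fun N => Nat.nth Nat.Prime N - 1) atTop atTop :=
    (tendsto_sub_atTop_nat 1).comp (Nat.nth_strictMono Nat.infinite_setOfPred_prime).tendsto_atTop
  refine ((ratio_lim k).comp h1).congr fun N => ?_
  have hp := Nat.prime_nth_prime N
  simp only [Function.comp]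
  rw [Nat.sub_add_cancel hp.one_le, ← sum_nth_prime (fun p => ((p ^ (k + 1)).totient.totient : ℝ)), ← sum_nth_prime (fun p => ((p ^ (k + 1)).totient : ℝ))]


end

/-- For every `k ≥ 0`, the ratio `(∑_{i=1}^N φ(φ(p_i^{k+1}))) / (∑_{i=1}^N φ(p_i^{k+1}))`
over the first `N` primes tends to Artin's constant. -/
theorem artin_ratio_formula_prime_powers (k : ℕ) :
    Tendsto (fun N : ℕ =>
        (∑ i ∈ Finset.range N, (((Nat.nth Nat.Prime i ^ (k + 1)).totient).totient : ℝ)) /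
        (∑ i ∈ Finset.range N, ((Nat.nth Nat.Prime i ^ (k + 1)).totient : ℝ)))
      atTop (nhds artinConstant) := by
  exact final_thm k
end
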